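/- arXiv:2603.12486 — 6 statements merged into one kernel-verified Lean document; each statement's English description precedes it below -/
import Mathlib

section
/- Let n ≥ 3, let X be any n×n complex matrix, and let 2 ≤ j ≤ i ≤ n−1. Then for all t, s ∈ ℂ, g_{ij}(t^{D_n} X s^{D̄_n}) = t^{ξ} s^{ξ̄} g_{ij}(X), where ξ = (i−j)(i−j+1)/2 + (n−i)(n−i−1)/2 + (j+1)n − 1 and ξ̄ = n(n+1)/2 + (j+1)(j−2)/2 + i. -/
/-!
Let `o(r)` be the number of leading zero columns of row `r` of `matG i j X`, and `a(r)` the row of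
`X` placed there, so that its entries are `X (a(r), c - o(r))`. Replacing `X` by `tD t * X * sD s`
multiplies such an entry by `t^(m+1-a(r)) * s^(c-o(r)+1)`: up to the factor `s^(-o(r))`, a row
factor times a column factor. Hence
`s^(∑ o(r)) * det G' = t^(∑ (m+1-a(r))) * s^(∑ (c+1)) * det G` (`det_matG_scaled`).
The exponent sums are evaluated in `sum_rowOff` and `sum_rowIdx`; for `s ≠ 0` the power of `s` on
the left is cancelled, and for `s = 0` both sides are zero.
-/

open Matrix

noncomputable section

/-- Entry of a matrix addressed with natural-number indices (0 out of range). -/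
def ent {N M : ℕ} (A : Matrix (Fin N) (Fin M) ℂ) (i j : ℕ) : ℂ :=
  if h : i < N ∧ j < M then A ⟨i, h.1⟩ ⟨j, h.2⟩ else 0

/-- The matrix `G_{ij}(X)` of size `n+j-1` (paper's `n = m+1`; `i, j` paper 1-based values). -/
def matG {m : ℕ} (i j : ℕ) (X : Matrix (Fin (m+1)) (Fin (m+1)) ℂ) :
    Matrix (Fin (m+j)) (Fin (m+j)) ℂ :=
  Matrix.of fun r c =>
    if (r:ℕ) < 2*(j-2) then
      (if (r:ℕ)/2 ≤ (c:ℕ) ∧ (c:ℕ) ≤ (r:ℕ)/2 + m then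
        ent X (if (r:ℕ) % 2 = 0 then 0 else m) ((c:ℕ) - (r:ℕ)/2) else 0)
    else if (r:ℕ) < 2*(j-2) + (i-j+2) then
      (if j-2 ≤ (c:ℕ) ∧ (c:ℕ) ≤ j-2+m then
        ent X (if (r:ℕ) = 2*(j-2) then 0 else m+j-i-1 + ((r:ℕ) - 2*(j-2))) ((c:ℕ) - (j-2))
       else 0)
    else
      (if j-1 ≤ (c:ℕ) ∧ (c:ℕ) ≤ j-1+m then
        ent X (if (r:ℕ) = 2*(j-2)+(i-j+2) then 0 else i-1 + ((r:ℕ) - (2*(j-2)+(i-j+2))))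
          ((c:ℕ) - (j-1))
       else 0)

/-- `t^{D_n} = diag(t^n, t^{n-1}, …, t)` with `n = m+1`. -/
def tD {m : ℕ} (t : ℂ) : Matrix (Fin (m+1)) (Fin (m+1)) ℂ :=
  Matrix.diagonal fun i => t ^ (m+1 - (i:ℕ))

/-- `s^{D̄_n} = diag(s, s², …, s^n)` with `n = m+1`. -/
def sD {m : ℕ} (s : ℂ) : Matrix (Fin (m+1)) (Fin (m+1)) ℂ :=
  Matrix.diagonal fun i => s ^ ((i:ℕ) + 1)

/-- Number of leading zero columns in row `r` of `matG i j X`, that is, the 0-based number of the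
block row containing `r`. -/
def rowOff (i j r : ℕ) : ℕ :=
  if r < 2*(j-2) then r/2 else if r < 2*(j-2) + (i-j+2) then j-2 else j-1

/-- The 0-based index of the row of `X` that is placed in row `r` of `matG i j X`. -/
def rowIdx (m i j r : ℕ) : ℕ :=
  if r < 2*(j-2) then (if r % 2 = 0 then 0 else m)
  else if r < 2*(j-2) + (i-j+2) then (if r = 2*(j-2) then 0 else m+j-i-1 + (r - 2*(j-2)))
  else (if r = 2*(j-2)+(i-j+2) then 0 else i-1 + (r - (2*(j-2)+(i-j+2))))

lemma matG_apply {m : ℕ} (i j : ℕ) (X : Matrix (Fin (m+1)) (Fin (m+1)) ℂ) (r c : Fin (m+j)) :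
    matG i j X r c = if rowOff i j r ≤ (c:ℕ) ∧ (c:ℕ) ≤ rowOff i j r + m then
      ent X (rowIdx m i j r) ((c:ℕ) - rowOff i j r) else 0 := by
  simp only [matG, rowOff, rowIdx, Matrix.of_apply]
  by_cases h1 : (r:ℕ) < 2*(j-2)
  · simp only [h1, if_true]
  · by_cases h2 : (r:ℕ) < 2*(j-2) + (i-j+2)
    · simp only [h1, h2, if_true, if_false]
    · simp only [h1, h2, if_false]

lemma ent_scaled {m : ℕ} (X : Matrix (Fin (m+1)) (Fin (m+1)) ℂ) (t s : ℂ) (a b : ℕ) :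
    ent (tD t * X * sD s) a b = t ^ (m+1-a) * s ^ (b+1) * ent X a b := by
  unfold ent
  split_ifs with h
  · simp only [tD, sD, Matrix.mul_diagonal, Matrix.diagonal_mul]
    ring
  · simp

/-- The shift by `rowOff` is moved to the left-hand side, so that no negative power of `s` occurs
and the identity holds for `s = 0` as well. -/
lemma matG_scaled {m : ℕ} (i j : ℕ) (X : Matrix (Fin (m+1)) (Fin (m+1)) ℂ) (t s : ℂ)
    (r c : Fin (m+j)) :
    s ^ rowOff i j r * matG i j (tD t * X * sD s) r c
      = t ^ (m+1 - rowIdx m i j r) * (s ^ ((c:ℕ)+1) * matG i j X r c) := by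
  rw [matG_apply, matG_apply]
  split_ifs with h
  · rw [ent_scaled]
    have : (c:ℕ) + 1 = rowOff i j r + ((c:ℕ) - rowOff i j r + 1) := by omega
    rw [this, pow_add]
    ring
  · simp

/-- Taking determinants in `matG_scaled`. -/
lemma det_matG_scaled {m : ℕ} (i j : ℕ) (X : Matrix (Fin (m+1)) (Fin (m+1)) ℂ) (t s : ℂ) :
    s ^ (∑ r ∈ Finset.range (m+j), rowOff i j r) * (matG i j (tD t * X * sD s)).det
      = t ^ (∑ r ∈ Finset.range (m+j), (m+1 - rowIdx m i j r))
        * (s ^ (∑ c ∈ Finset.range (m+j), (c+1)) * (matG i j X).det) := by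
  simp only [Finset.sum_range, ← Finset.prod_pow_eq_pow_sum]
  rw [← Matrix.det_mul_column, ← Matrix.det_mul_row, ← Matrix.det_mul_column]
  congr 1
  ext r c
  simpa only [Matrix.of_apply] using matG_scaled i j X t s r c

lemma two_mul_sum_sub (q : ℕ) : 2 * ∑ k ∈ Finset.range q, (q - k) = q * (q+1) := by
  induction q with
  | zero => simp
  | succ q ih =>
    rw [Finset.sum_range_succ']
    simp only [Nat.add_sub_add_right, Nat.sub_zero, mul_add, ih]
    ring

lemma two_mul_sum_succ (N : ℕ) : 2 * ∑ c ∈ Finset.range N, (c+1) = N * (N+1) := by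
  induction N with
  | zero => simp
  | succ q ih =>
    rw [Finset.sum_range_succ, mul_add, ih]
    ring

lemma sum_div_two (p : ℕ) : ∑ r ∈ Finset.range (2*p), r/2 + p = p*p := by
  induction p with
  | zero => simp
  | succ p ih =>
    have h : 2*(p+1) = 2*p+1+1 := by ring
    have h1 : (2*p)/2 = p := by omega
    have h2 : (2*p+1)/2 = p := by omega
    rw [h, Finset.sum_range_succ, Finset.sum_range_succ, h1, h2]
    linarith

lemma sum_parity (p m : ℕ) :
    ∑ r ∈ Finset.range (2*p), (m+1 - if r % 2 = 0 then 0 else m) = p*(m+2) := by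
  induction p with
  | zero => simp
  | succ p ih =>
    have h : 2*(p+1) = 2*p+1+1 := by ring
    have h1 : (2*p) % 2 = 0 := by omega
    have h2 : (2*p+1) % 2 ≠ 0 := by omega
    rw [h, Finset.sum_range_succ, Finset.sum_range_succ, ih, if_pos h1, if_neg h2]
    have h3 : m + 1 - m = 1 := by omega
    rw [h3, Nat.sub_zero]
    ring

/-- The total shift, for `j = p+2`, `i = j+q`, `m = i+d`; the matrix then has
`2p + (q+2) + (d+2)` rows, the three summands being the rows of the three types of blocks. -/
lemma sum_rowOff (p q d : ℕ) :
    ∑ r ∈ Finset.range (2*p + (q+2) + (d+2)), rowOff (p+2+q) (p+2) r + p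
      = p*p + (q+2)*p + (d+2)*(p+1) := by
  rw [Finset.sum_range_add, Finset.sum_range_add]
  have e1 : ∑ r ∈ Finset.range (2*p), rowOff (p+2+q) (p+2) r = ∑ r ∈ Finset.range (2*p), r/2 := by
    refine Finset.sum_congr rfl fun r hr => ?_
    rw [Finset.mem_range] at hr
    unfold rowOff
    split_ifs <;> omega
  have e2 : ∑ k ∈ Finset.range (q+2), rowOff (p+2+q) (p+2) (2*p+k) = (q+2)*p := by
    rw [Finset.sum_congr rfl (g := fun _ => p)]
    · simp
    · intro k hk
      rw [Finset.mem_range] at hk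
      unfold rowOff
      split_ifs <;> omega
  have e3 : ∑ k ∈ Finset.range (d+2), rowOff (p+2+q) (p+2) (2*p+(q+2)+k) = (d+2)*(p+1) := by
    rw [Finset.sum_congr rfl (g := fun _ => p+1)]
    · simp
    · intro k hk
      unfold rowOff
      split_ifs <;> omega
  rw [e1, e2, e3, ← sum_div_two p]
  ring

/-- The total `t`-exponent, in the parameters of `sum_rowOff`. -/
lemma sum_rowIdx (p q d : ℕ) :
    2 * ∑ r ∈ Finset.range (2*p + (q+2) + (d+2)),
        (p+2+q+d+1 - rowIdx (p+2+q+d) (p+2+q) (p+2) r)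
      = 2*(p*(p+2+q+d+2)) + ((q+1)*(q+2) + 2*(p+2+q+d+1))
        + ((d+1)*(d+2) + 2*(p+2+q+d+1)) := by
  rw [Finset.sum_range_add, Finset.sum_range_add]
  have e1 : ∑ r ∈ Finset.range (2*p), (p+2+q+d+1 - rowIdx (p+2+q+d) (p+2+q) (p+2) r)
      = p*(p+2+q+d+2) := by
    rw [← sum_parity]
    refine Finset.sum_congr rfl fun r hr => ?_
    rw [Finset.mem_range] at hr
    have h : r < 2*(p+2-2) := by omega
    simp only [rowIdx, h, if_true]
  have e2 : ∑ k ∈ Finset.range (q+2),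
      (p+2+q+d+1 - rowIdx (p+2+q+d) (p+2+q) (p+2) (2*p+k))
      = ∑ k ∈ Finset.range (q+1), (q+1-k) + (p+2+q+d+1) := by
    rw [Finset.sum_range_succ']
    congr 1
    · refine Finset.sum_congr rfl fun k hk => ?_
      rw [Finset.mem_range] at hk
      unfold rowIdx
      split_ifs <;> omega
    · unfold rowIdx
      split_ifs <;> omega
  have e3 : ∑ k ∈ Finset.range (d+2),
      (p+2+q+d+1 - rowIdx (p+2+q+d) (p+2+q) (p+2) (2*p+(q+2)+k))
      = ∑ k ∈ Finset.range (d+1), (d+1-k) + (p+2+q+d+1) := by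
    rw [Finset.sum_range_succ']
    congr 1
    · refine Finset.sum_congr rfl fun k hk => ?_
      rw [Finset.mem_range] at hk
      unfold rowIdx
      split_ifs <;> omega
    · unfold rowIdx
      split_ifs <;> omega
  rw [e1, e2, e3]
  linarith [two_mul_sum_sub (q+1), two_mul_sum_sub (d+1)]

/-- homogeneity of `g_{ij}` under `X ↦ t^{D_n} X s^{D̄_n}` (with `n = m+1 ≥ 3`,
`2 ≤ j ≤ i ≤ n-1`): `g_{ij}(t^{D_n} X s^{D̄_n}) = t^ξ s^ξ̄ g_{ij}(X)` with
`ξ = (i-j)(i-j+1)/2 + (n-i)(n-i-1)/2 + (j+1)n - 1` and `ξ̄ = n(n+1)/2 + (j+1)(j-2)/2 + i`. -/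
theorem g_homogeneity (m : ℕ) (hm : 2 ≤ m) (i j : ℕ) (hj : 2 ≤ j) (hji : j ≤ i) (him : i ≤ m)
    (X : Matrix (Fin (m+1)) (Fin (m+1)) ℂ) (t s : ℂ) :
    (matG i j (tD t * X * sD s)).det
      = t ^ ((i-j)*(i-j+1)/2 + (m+1-i)*(m-i)/2 + (j+1)*(m+1) - 1)
        * s ^ ((m+1)*(m+2)/2 + (j+1)*(j-2)/2 + i)
        * (matG i j X).det := by
  obtain ⟨p, rfl⟩ : ∃ p, j = p + 2 := ⟨j - 2, by omega⟩
  obtain ⟨q, rfl⟩ := Nat.exists_eq_add_of_le hji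
  obtain ⟨d, rfl⟩ := Nat.exists_eq_add_of_le him
  have hdet := det_matG_scaled (p+2+q) (p+2) X t s
  have hN : p+2+q+d+(p+2) = 2*p + (q+2) + (d+2) := by ring
  have hO := sum_rowOff p q d
  have hT := sum_rowIdx p q d
  have hC := two_mul_sum_succ (2*p + (q+2) + (d+2))
  rw [← hN] at hO hT hC
  have s1 : p+2+q-(p+2) = q := by omega
  have s2 : p+2+q+d+1-(p+2+q) = d+1 := by omega
  have s3 : p+2+q+d-(p+2+q) = d := by omega
  have s4 : p+2-2 = p := by omega
  rw [s1, s2, s3, s4]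
  -- Every halved product is even, so the divisions in the exponents are exact.
  have d1 : 2 * (q*(q+1)/2) = q*(q+1) := Nat.mul_div_cancel' (Nat.even_mul_succ_self q).two_dvd
  have d2 : 2 * ((d+1)*d/2) = (d+1)*d := by
    rw [mul_comm (d+1) d]
    exact Nat.mul_div_cancel' (Nat.even_mul_succ_self d).two_dvd
  have d3 : 2 * ((p+2+q+d+1)*(p+2+q+d+2)/2) = (p+2+q+d+1)*(p+2+q+d+2) :=
    Nat.mul_div_cancel' (Nat.even_mul_succ_self (p+2+q+d+1)).two_dvd
  have d4 : 2 * ((p+2+1)*p/2) = (p+2+1)*p := by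
    refine Nat.mul_div_cancel' ?_
    obtain ⟨k, hk⟩ := (Nat.even_mul_succ_self p).two_dvd
    exact ⟨k + p, by nlinarith⟩
  generalize ∑ r ∈ Finset.range (p+2+q+d+(p+2)), rowOff (p+2+q) (p+2) r = O at *
  generalize ∑ r ∈ Finset.range (p+2+q+d+(p+2)),
    (p+2+q+d+1 - rowIdx (p+2+q+d) (p+2+q) (p+2) r) = T at *
  generalize ∑ c ∈ Finset.range (p+2+q+d+(p+2)), (c+1) = C at *
  generalize q*(q+1)/2 = A at *
  generalize (d+1)*d/2 = B at *
  generalize (p+2+q+d+1)*(p+2+q+d+2)/2 = E at *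
  generalize (p+2+1)*p/2 = F at *
  have hTe : A + B + (p+2+1)*(p+2+q+d+1) - 1 = T := by
    have : A + B + (p+2+1)*(p+2+q+d+1) = T + 1 := by linarith
    omega
  have hCe : C = O + (E + F + (p+2+q)) := by linarith
  rw [hTe]
  rcases eq_or_ne s 0 with rfl | hs
  -- For `s = 0` both sides vanish: the scaled matrix is zero and the exponent of `s` is positive.
  · have hz : matG (p+2+q) (p+2) (tD t * X * sD 0) = 0 := by
      ext r c
      rw [matG_apply, ent_scaled]
      simp
    haveI : Nonempty (Fin (p+2+q+d+(p+2))) := ⟨⟨0, by omega⟩⟩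
    rw [hz, Matrix.det_zero, zero_pow (by omega)]
    simp
  · rw [hCe, pow_add] at hdet
    refine mul_left_cancel₀ (pow_ne_zero O hs) ?_
    rw [hdet]
    ring

end
end

section
/- Let n ≥ 2, let X be any n×n complex matrix, and let m ∈ [1,2n−1]. Then for all t, s ∈ ℂ, f_m(t^{D_n} X s^{D̄_n}) = t^{ξ} s^{ξ̄} f_m(X), where ξ = m(n+1)/2 and ξ̄ = nm − m²/4 if m is even, and ξ = (m−1)(n+1)/2 + 1 and ξ̄ = nm − (m²−1)/4 if m is odd. -/
/-!
The substitution `X ↦ t^{D_n} X s^{D̄_n}` multiplies the entry of `F(X)` in row `r` and column `c`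
by a power of `t` depending only on `r` and, when the entry lies in the band where `F(X)` may be
nonzero, by `s ^ (c + 1 - ⌊(r+1)/2⌋)`. In each nonzero term of the Leibniz expansion these
factors have the same product, the exponent of `s` being the sum of the column weights `c + 1` minus
the sum of the row weights `⌊(r+1)/2⌋`. Working term by term (`det_weighted`) covers
`s = 0` as well. It remains to add up the exponents over the last `M` rows and columns, which are
enumerated from the bottom right corner as `2m - k` with `k < M`.
-/

open Matrix

noncomputable section

/-- The matrix `F(X)` (paper's `n = m+1`). -/
def matF {m : ℕ} (X : Matrix (Fin (m+1)) (Fin (m+1)) ℂ) :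
    Matrix (Fin (2*m+1)) (Fin (2*m+1)) ℂ :=
  Matrix.of fun r c =>
    if ((r:ℕ)+1)/2 ≤ (c:ℕ) ∧ (c:ℕ) ≤ ((r:ℕ)+1)/2 + m then
      ent X (if (r:ℕ) % 2 = 1 then 0 else m) ((c:ℕ) - ((r:ℕ)+1)/2)
    else 0

/-- Determinant of the trailing principal `k × k` submatrix (last `k` rows and columns). -/
def trailingMinor {N : ℕ} (A : Matrix (Fin N) (Fin N) ℂ) (k : ℕ) : ℂ :=
  Matrix.det (Matrix.of fun a b : Fin k => ent A (N - k + (a:ℕ)) (N - k + (b:ℕ)))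

/-- If the entries of `B` are those of `A` scaled by row factors `w i` and by powers
`s ^ (c j - h i)`, where the exponent is a genuine difference at every nonzero entry of `A`, then
all terms of the Leibniz expansion scale by the same factor. -/
lemma det_weighted {k : ℕ} (A B : Matrix (Fin k) (Fin k) ℂ) (w : Fin k → ℂ) (c h : Fin k → ℕ)
    (s : ℂ) (hA : ∀ i j, A i j ≠ 0 → h i ≤ c j)
    (hB : ∀ i j, B i j = w i * s ^ (c j - h i) * A i j) :
    B.det = (∏ i, w i) * s ^ (∑ i, c i - ∑ i, h i) * A.det := by
  rw [← Matrix.det_transpose B, ← Matrix.det_transpose A, Matrix.det_apply, Matrix.det_apply,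
    Finset.mul_sum]
  refine Finset.sum_congr rfl fun σ _ => ?_
  rw [mul_smul_comm]
  congr 1
  simp only [Matrix.transpose_apply, hB]
  rw [Finset.prod_mul_distrib, Finset.prod_mul_distrib, Finset.prod_pow_eq_pow_sum]
  by_cases h0 : ∏ i, A i (σ i) = 0
  · simp [h0]
  · replace h0 := Finset.prod_ne_zero_iff.1 h0
    have h1 : ∑ i, (c (σ i) - h i) = ∑ i, c i - ∑ i, h i := by
      rw [← Equiv.sum_comp σ c]
      exact Finset.sum_tsub_distrib _ fun i hi => hA _ _ (h0 i hi)
    rw [h1]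

/-- Entries of `F(X)` transform by a row factor and a column-minus-row power of `s`. -/
lemma matF_scaled {m : ℕ} (X : Matrix (Fin (m+1)) (Fin (m+1)) ℂ) (t s : ℂ) (r c : ℕ) :
    ent (matF (tD t * X * sD s)) r c
      = t ^ (if r % 2 = 1 then m + 1 else 1) * s ^ (c + 1 - (r+1)/2) * ent (matF X) r c := by
  unfold ent
  split_ifs with h1 h2 <;> try simp
  all_goals
    simp only [matF, Matrix.of_apply]
    split_ifs with h3 <;> try simp
  all_goals
    have h4 : c - (r+1)/2 < m + 1 := by omega
    have h5 : c + 1 - (r+1)/2 = c - (r+1)/2 + 1 := by omega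
    simp [ent, h4, h5, tD, sD, Matrix.mul_diagonal, Matrix.diagonal_mul]
    ring

lemma matF_ne_zero {m : ℕ} (X : Matrix (Fin (m+1)) (Fin (m+1)) ℂ) (r c : ℕ)
    (h : ent (matF X) r c ≠ 0) : (r+1)/2 ≤ c + 1 := by
  by_contra hlt
  apply h
  unfold ent
  split_ifs
  · simp only [matF, Matrix.of_apply]
    rw [if_neg (by omega)]
  · rfl

/-- Sums over the last `M` indices of `[0, 2m]`, enumerated from the end. -/
lemma sum_trailing (m M : ℕ) (hM : M ≤ 2*m+1) (g : ℕ → ℕ) :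
    ∑ i : Fin M, g (2*m+1 - M + i) = ∑ k ∈ Finset.range M, g (2*m - k) := by
  rw [Fin.sum_univ_eq_sum_range (fun i => g (2*m+1 - M + i)), ← Finset.sum_range_reflect]
  refine Finset.sum_congr rfl fun k hk => ?_
  have := Finset.mem_range.1 hk
  congr 1
  omega

lemma t_exponent (m M : ℕ) (hM : M ≤ 2*m+1) :
    ∑ k ∈ Finset.range M, (if (2*m - k) % 2 = 1 then m + 1 else 1)
      = if M % 2 = 0 then M*(m+2)/2 else (M-1)*(m+2)/2 + 1 := by
  have key : ∀ M ≤ 2*m+1, ∑ k ∈ Finset.range M, (if (2*m - k) % 2 = 1 then m + 1 else 1)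
      = (M/2)*(m+2) + M % 2 := by
    intro M
    induction M with
    | zero => simp
    | succ K ih =>
      intro hK
      rw [Finset.sum_range_succ, ih (by omega)]
      rcases Nat.even_or_odd' K with ⟨q, rfl | rfl⟩
      · rw [if_neg (by omega), show (2*q+1)/2 = q by omega, show 2*q/2 = q by omega]
        omega
      · rw [if_pos (by omega), show (2*q+1)/2 = q by omega, show (2*q+1+1)/2 = q+1 by omega,
          add_mul]
        omega
  rw [key M hM]
  rcases Nat.even_or_odd' M with ⟨q, rfl | rfl⟩
  · rw [if_pos (by omega), mul_assoc, show 2*q/2 = q by omega]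
    omega
  · rw [if_neg (by omega), show 2*q+1-1 = 2*q by omega, mul_assoc, show (2*q+1)/2 = q by omega]
    omega

lemma s_exponent (m M : ℕ) (hM : M ≤ 2*m+1) :
    ∑ k ∈ Finset.range M, (2*m - k + 1) - ∑ k ∈ Finset.range M, (2*m - k + 1)/2
      = if M % 2 = 0 then (m+1)*M - M^2/4 else (m+1)*M - (M^2-1)/4 := by
  -- `⌊M²/4⌋` is the sum of `⌈k/2⌉` over `k < M`; the truncated subtraction is moved across.
  have key : ∀ M ≤ 2*m+1, ∑ k ∈ Finset.range M, (2*m - k + 1) + M^2/4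
      = (m+1)*M + ∑ k ∈ Finset.range M, (2*m - k + 1)/2 := by
    intro M
    induction M with
    | zero => simp
    | succ K ih =>
      intro hK
      have ih := ih (by omega)
      rw [Finset.sum_range_succ, Finset.sum_range_succ, mul_add]
      have h1 : (K+1)^2/4 = K^2/4 + (K+1)/2 := by
        rcases Nat.even_or_odd' K with ⟨q, rfl | rfl⟩ <;> ring_nf <;> omega
      omega
  have h := key M hM
  have h2 : M % 2 = 1 → (M^2-1)/4 = M^2/4 := by
    intro h
    obtain ⟨q, rfl⟩ : ∃ q, M = 2*q+1 := ⟨M/2, by omega⟩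
    ring_nf
    omega
  split_ifs
  · omega
  · rw [h2 (by omega)]
    omega

/-- homogeneity of `f_M` under `X ↦ t^{D_n} X s^{D̄_n}` (with `n = m+1 ≥ 2` and
`M ∈ [1, 2n-1]`): `f_M(t^{D_n} X s^{D̄_n}) = t^ξ s^ξ̄ f_M(X)` with `ξ = M(n+1)/2`,
`ξ̄ = nM - M²/4` for `M` even and `ξ = (M-1)(n+1)/2 + 1`, `ξ̄ = nM - (M²-1)/4` for `M` odd. -/
theorem f_homogeneity (m : ℕ) (hm : 1 ≤ m) (M : ℕ) (hM1 : 1 ≤ M) (hM2 : M ≤ 2*m+1)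
    (X : Matrix (Fin (m+1)) (Fin (m+1)) ℂ) (t s : ℂ) :
    trailingMinor (matF (tD t * X * sD s)) M
      = t ^ (if M % 2 = 0 then M*(m+2)/2 else (M-1)*(m+2)/2 + 1)
        * s ^ (if M % 2 = 0 then (m+1)*M - M^2/4 else (m+1)*M - (M^2-1)/4)
        * trailingMinor (matF X) M := by
  unfold trailingMinor
  refine (det_weighted _ _ (fun i => t ^ (if (2*m+1 - M + (i:ℕ)) % 2 = 1 then m + 1 else 1))
    (fun j => 2*m+1 - M + (j:ℕ) + 1) (fun i => (2*m+1 - M + (i:ℕ) + 1)/2) s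
    (fun i j hij => matF_ne_zero X _ _ hij) (fun i j => matF_scaled X t s _ _)).trans ?_
  rw [Finset.prod_pow_eq_pow_sum, sum_trailing m M hM2 (fun r => if r % 2 = 1 then m + 1 else 1),
    sum_trailing m M hM2 (fun r => r + 1), sum_trailing m M hM2 (fun r => (r + 1)/2),
    t_exponent m M hM2, s_exponent m M hM2]
  rfl

end
end

section
/- Let (h_i)_{i≥0} be a sequence in a commutative ring. For m ≥ 0 and s ∈ {0,1,2}, let H_m^{(s)} = det(h_{α+β−2+s})_{α,β=1}^m, with the convention H_0^{(s)} = 1. Then for every m ≥ 1, H_m^{(0)} · H_m^{(2)} = H_{m+1}^{(0)} · H_{m−1}^{(2)} + (H_m^{(1)})². -/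
/-!
The identity is the case `A = (h_{a+b})` of the Desnanot–Jacobi identity
`A₀₀* A_ll* - A₀l* A_l₀* = det A · det A_int`, where `A*` is the adjugate of `A`, `l` is the last
index and `A_int` is `A` without its first and last rows and columns: for a Hankel matrix the four
corner cofactors are, up to sign, `H_m^{(2)}`, `H_m^{(0)}`, `H_m^{(1)}` and `H_m^{(1)}`, and
`det A_int = H_{m-1}^{(2)}`.

The general identity is Jacobi's theorem on the `2 × 2` minors of the adjugate. Ordering the indices
so that the two distinguished ones come last and multiplying `M` by the matrix obtained from the
identity by replacing its last two columns with those of `adj M` gives a block triangular matrix;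
taking determinants, `det M · det (adj M)₂₂ = det M₁₁ · (det M)²`
(`det_mul_det_adjugate_toBlocks₂₂`). One factor `det M` cancels for the matrix of indeterminates over
`ℤ`, whose determinant is nonzero, and the result specializes to every commutative ring
(`det_adjugate_toBlocks₂₂`).
-/

open Matrix

theorem det_mul_det_adjugate_toBlocks₂₂ {R ι κ : Type*} [CommRing R] [Fintype ι] [DecidableEq ι]
    [Fintype κ] [DecidableEq κ] (M : Matrix (ι ⊕ κ) (ι ⊕ κ) R) :
    M.det * M.adjugate.toBlocks₂₂.det = M.toBlocks₁₁.det * M.det ^ Fintype.card κ := by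
  have hMadj := M.mul_adjugate
  have key : M * fromBlocks 1 M.adjugate.toBlocks₁₂ 0 M.adjugate.toBlocks₂₂
      = fromBlocks M.toBlocks₁₁ 0 M.toBlocks₂₁ (M.det • 1) := by
    ext i (j | j)
    · rcases i with i | i <;>
        simp [Matrix.mul_apply, Fintype.sum_sum_type, toBlocks₁₁, toBlocks₂₁, Matrix.one_apply]
    · have hij := congrFun (congrFun hMadj i) (Sum.inr j)
      rcases i with i | i <;>
        simpa [Matrix.mul_apply, Fintype.sum_sum_type, toBlocks₁₂, toBlocks₂₂, Matrix.one_apply]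
          using hij
  have hdet := congrArg Matrix.det key
  simpa [det_mul, det_fromBlocks_zero₂₁, det_fromBlocks_zero₁₂, det_smul] using hdet

/-- Jacobi's theorem on the complementary minors of the adjugate, for minors of size two. -/
theorem det_adjugate_toBlocks₂₂ {R ι : Type*} [CommRing R] [Fintype ι] [DecidableEq ι]
    (M : Matrix (ι ⊕ Fin 2) (ι ⊕ Fin 2) R) :
    M.adjugate.toBlocks₂₂.det = M.det * M.toBlocks₁₁.det := by
  let X := mvPolynomialX (ι ⊕ Fin 2) (ι ⊕ Fin 2) ℤ
  have generic : X.adjugate.toBlocks₂₂.det = X.det * X.toBlocks₁₁.det := by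
    apply mul_left_cancel₀ (det_mvPolynomialX_ne_zero (ι ⊕ Fin 2) ℤ)
    have hX := det_mul_det_adjugate_toBlocks₂₂ X
    rw [Fintype.card_fin] at hX
    exact hX.trans (by ring)
  let f : MvPolynomial ((ι ⊕ Fin 2) × (ι ⊕ Fin 2)) ℤ →+* R :=
    MvPolynomial.eval₂Hom (Int.castRingHom R) fun p => M p.1 p.2
  have hfX : f.mapMatrix X = M := by
    ext i j
    simp [f, X]
  have hadj : f.mapMatrix X.adjugate.toBlocks₂₂ = M.adjugate.toBlocks₂₂ := by
    rw [← hfX, ← RingHom.map_adjugate]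
    rfl
  have h₁₁ : f.mapMatrix X.toBlocks₁₁ = M.toBlocks₁₁ := by
    rw [← hfX]
    rfl
  have hf := congrArg f generic
  rwa [map_mul, RingHom.map_det, RingHom.map_det, RingHom.map_det, hadj, h₁₁, hfX] at hf

/-- The map sending `Fin n` to the interior indices of `Fin (n + 2)` and `Fin 2` to its first and
last index. -/
def interiorCorner (n : ℕ) : Fin n ⊕ Fin 2 → Fin (n + 2) :=
  Sum.elim (fun i => i.succ.castSucc) ![0, Fin.last (n + 1)]

theorem interiorCorner_bijective (n : ℕ) : Function.Bijective (interiorCorner n) := by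
  rw [Fintype.bijective_iff_injective_and_card]
  refine ⟨?_, by simp⟩
  rintro (a | a) (b | b) hab
  · simpa [interiorCorner] using hab
  · have ha := a.isLt
    fin_cases b <;> simp [interiorCorner, Fin.ext_iff] at hab
    omega
  · have hb := b.isLt
    fin_cases a <;> simp [interiorCorner, Fin.ext_iff] at hab
    omega
  · fin_cases a <;> fin_cases b <;> simp [interiorCorner, Fin.ext_iff] at hab ⊢

theorem desnanot_jacobi {R : Type*} [CommRing R] {n : ℕ} (A : Matrix (Fin (n + 2)) (Fin (n + 2)) R) :
    A.adjugate 0 0 * A.adjugate (Fin.last _) (Fin.last _)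
        - A.adjugate 0 (Fin.last _) * A.adjugate (Fin.last _) 0
      = A.det * (A.submatrix (fun i : Fin n => i.succ.castSucc) fun i => i.succ.castSucc).det := by
  let e := Equiv.ofBijective _ (interiorCorner_bijective n)
  have hJ := det_adjugate_toBlocks₂₂ (A.submatrix e e)
  rw [adjugate_submatrix_equiv_self, det_submatrix_equiv_self, det_fin_two] at hJ
  exact hJ


/-- Desnanot–Jacobi identity for Hankel determinants: for a sequence `h` in a
commutative ring and `H_m^{(s)} = det (h_{α+β-2+s})_{α,β=1}^m` (0-based: entry `(a,b)` is
`h (a+b+s)`), one has `H_m^{(0)} H_m^{(2)} = H_{m+1}^{(0)} H_{m-1}^{(2)} + (H_m^{(1)})²`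
for every `m ≥ 1`. -/
theorem hankel_desnanot_jacobi {R : Type*} [CommRing R] (h : ℕ → R) (m : ℕ) (hm : 1 ≤ m) :
    (Matrix.det (Matrix.of fun a b : Fin m => h ((a:ℕ)+(b:ℕ))))
        * (Matrix.det (Matrix.of fun a b : Fin m => h ((a:ℕ)+(b:ℕ)+2)))
      = (Matrix.det (Matrix.of fun a b : Fin (m+1) => h ((a:ℕ)+(b:ℕ))))
          * (Matrix.det (Matrix.of fun a b : Fin (m-1) => h ((a:ℕ)+(b:ℕ)+2)))
        + (Matrix.det (Matrix.of fun a b : Fin m => h ((a:ℕ)+(b:ℕ)+1)))^2 := by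
  obtain ⟨n, rfl⟩ : ∃ n, m = n + 1 := ⟨m - 1, by omega⟩
  let A : Matrix (Fin (n + 2)) (Fin (n + 2)) R := of fun a b => h ((a : ℕ) + (b : ℕ))
  have hDJ := desnanot_jacobi A
  simp only [adjugate_fin_succ_eq_det_submatrix, Fin.succAbove_zero, Fin.succAbove_last,
    Fin.val_zero, Fin.val_last] at hDJ
  have h₀₀ : A.submatrix Fin.succ Fin.succ
      = of fun a b : Fin (n + 1) => h ((a : ℕ) + (b : ℕ) + 2) := by
    ext a b
    exact congrArg h (by simp; omega)
  have hll : A.submatrix Fin.castSucc Fin.castSucc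
      = of fun a b : Fin (n + 1) => h ((a : ℕ) + (b : ℕ)) := rfl
  have h₀l : A.submatrix Fin.succ Fin.castSucc
      = of fun a b : Fin (n + 1) => h ((a : ℕ) + (b : ℕ) + 1) := by
    ext a b
    exact congrArg h (by simp; omega)
  have hl₀ : A.submatrix Fin.castSucc Fin.succ
      = of fun a b : Fin (n + 1) => h ((a : ℕ) + (b : ℕ) + 1) := by
    ext a b
    exact congrArg h (by simp; omega)
  have hInterior : A.submatrix (fun i : Fin n => i.succ.castSucc) (fun i => i.succ.castSucc)
      = of fun a b : Fin n => h ((a : ℕ) + (b : ℕ) + 2) := by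
    ext a b
    exact congrArg h (by simp; omega)
  rw [h₀₀, hll, h₀l, hl₀, hInterior] at hDJ
  have hsign : ((-1 : R) ^ (n + 1)) * (-1) ^ (n + 1) = 1 := by
    rw [← mul_pow]
    simp
  have hsign' : (-1 : R) ^ (n + 1 + (n + 1)) = 1 := by
    rw [pow_add, hsign]
  simp only [add_zero, zero_add, pow_zero, one_mul, hsign'] at hDJ
  change _ = _ * (of fun a b : Fin n => h ((a : ℕ) + (b : ℕ) + 2)).det + _
  linear_combination hDJ +
    (of fun a b : Fin (n + 1) => h ((a : ℕ) + (b : ℕ) + 1)).det ^ 2 * hsign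
end

section
/- Let n ≥ 2 and X ∈ GL_n(ℂ), and suppose the recursively defined sequence Y_0 = X, Y_{k+1} = X·𝛄(B_k) is defined for all k ≥ 0, i.e. each Y_k admits a factorization Y_k = B_k C_k with B_k unipotent upper-triangular and C_k invertible lower-triangular. Then the sequence stabilizes at k = n−2: Y_k = Y_{n−2} for every k ≥ n−2. -/
/-!
Write `B_{k+1} = B_k U_k` with `U_k` unipotent upper-triangular. On unipotent upper-triangular
matrices `𝛄` is multiplicative (`gam_mul`), so `Y_{k+2} = Y_{k+1} 𝛄(U_k)`; cancelling `B_{k+1}` gives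
`C_{k+1} 𝛄(U_k) = U_{k+1} C_{k+2}`, and likewise `C_0 𝛄(B_0) = U_0 C_1`.

Since `𝛄` shifts a matrix down the diagonal by one step, if the first `m` rows of `U` are those of
the identity then so are the first `m + 1` rows of `𝛄(U)` (`TopRowsOne.gam`). If the first `m` rows
of `G` are those of the identity and `C G = U C'` with `C`, `C'` lower-triangular, then the first
`m` rows of `C G` agree with those of `C`, so `U = C G C'⁻¹` has no entries right of the diagonal
in these rows (`TopRowsOne.of_mul_eq`). By induction the first `k + 1` rows of `U_k` are
those of the identity. Finally `𝛄(U) = 1` as soon as the first `n - 2` rows of `U` are those of the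
identity (`gam_eq_one`), because `𝛄` discards the last row and column. Hence `Y_{k+1} = Y_k` for
`k ≥ n - 2`.
-/

open Matrix

noncomputable section

/-- The lower shift matrix `S` (ones in positions `(i+1, i)`, zeros elsewhere). -/
def shiftS (n : ℕ) : Matrix (Fin n) (Fin n) ℂ :=
  Matrix.of fun i j => if (i:ℕ) = (j:ℕ) + 1 then 1 else 0

/-- `𝛄(B) = I + S (B - I) Sᵀ`. -/
def gam {n : ℕ} (B : Matrix (Fin n) (Fin n) ℂ) : Matrix (Fin n) (Fin n) ℂ :=
  1 + shiftS n * (B - 1) * (shiftS n)ᵀ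

/-- `B` is unipotent upper-triangular. -/
def UniUpper {n : ℕ} (B : Matrix (Fin n) (Fin n) ℂ) : Prop :=
  (∀ i j : Fin n, (j:ℕ) < (i:ℕ) → B i j = 0) ∧ (∀ i, B i i = 1)

/-- `C` is invertible lower-triangular. -/
def InvLower {n : ℕ} (C : Matrix (Fin n) (Fin n) ℂ) : Prop :=
  (∀ i j : Fin n, (i:ℕ) < (j:ℕ) → C i j = 0) ∧ IsUnit C.det

/-- The first `m` rows of `A` are those of the identity matrix. -/
def TopRowsOne {n : ℕ} (m : ℕ) (A : Matrix (Fin n) (Fin n) ℂ) : Prop :=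
  ∀ i j : Fin n, (i:ℕ) < m → A i j = (1 : Matrix (Fin n) (Fin n) ℂ) i j

lemma UniUpper.blockTriangular {n : ℕ} {B : Matrix (Fin n) (Fin n) ℂ} (hB : UniUpper B) :
    B.BlockTriangular id :=
  fun i j h => hB.1 i j h

lemma UniUpper.isUnit_det {n : ℕ} {B : Matrix (Fin n) (Fin n) ℂ} (hB : UniUpper B) :
    IsUnit B.det := by
  rw [Matrix.det_of_isUpperTriangular hB.blockTriangular]
  simp [hB.2]

lemma UniUpper.sub_one_apply {n : ℕ} {U : Matrix (Fin n) (Fin n) ℂ} (hU : UniUpper U)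
    {i j : Fin n} (h : (j:ℕ) ≤ i) : (U - 1) i j = 0 := by
  rcases h.lt_or_eq with h | h
  · have hne : i ≠ j := fun e => by simp [e] at h
    simp [hU.1 i j h, Matrix.one_apply_ne hne]
  · obtain rfl : j = i := Fin.ext h
    simp [hU.2]

lemma UniUpper.exists_eq_mul {n : ℕ} {A B : Matrix (Fin n) (Fin n) ℂ} (hA : UniUpper A)
    (hB : UniUpper B) : ∃ U, UniUpper U ∧ B = A * U := by
  have hAB : B = A * (A⁻¹ * B) := by
    rw [← Matrix.mul_assoc, Matrix.mul_nonsing_inv _ hA.isUnit_det, Matrix.one_mul]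
  have hU : (A⁻¹ * B).BlockTriangular id := by
    have := Matrix.invertibleOfIsUnitDet A hA.isUnit_det
    exact (Matrix.blockTriangular_inv_of_blockTriangular hA.blockTriangular).mul
      hB.blockTriangular
  refine ⟨A⁻¹ * B, ⟨fun i j h => hU h, fun i => ?_⟩, hAB⟩
  generalize A⁻¹ * B = U at hAB hU
  -- the diagonal of a product of triangular matrices is the product of the diagonals
  have h := congrFun (congrFun hAB i) i
  rw [hB.2, Matrix.mul_apply, Finset.sum_eq_single i, hA.2, one_mul] at h
  · exact h.symm
  · intro l _ hl
    rcases lt_or_gt_of_ne hl with hl | hl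
    · rw [hA.1 i l hl, zero_mul]
    · rw [hU hl, mul_zero]
  · simp

/-- `Sᵀ S` is the identity with its last diagonal entry removed, and the last row of `U - 1`
vanishes. -/
lemma shiftS_transpose_mul_shiftS_mul {n : ℕ} {U : Matrix (Fin n) (Fin n) ℂ} (hU : UniUpper U) :
    (shiftS n)ᵀ * (shiftS n * (U - 1)) = U - 1 := by
  ext i j
  by_cases hi : (i:ℕ) + 1 < n
  · rw [Matrix.mul_apply, Finset.sum_eq_single ⟨i + 1, hi⟩, Matrix.mul_apply,
      Finset.sum_eq_single i]
    · simp [shiftS]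
    · intro l _ hl
      have : ¬ ((i:ℕ) = l) := fun e => hl (Fin.ext e.symm)
      simp [shiftS, this]
    · simp
    · intro l _ hl
      have : ¬ ((l:ℕ) = i + 1) := fun e => hl (Fin.ext e)
      simp [shiftS, this]
    · simp
  · rw [hU.sub_one_apply (by omega), Matrix.mul_apply]
    refine Finset.sum_eq_zero fun l _ => ?_
    have : ¬ ((l:ℕ) = i + 1) := by omega
    simp [shiftS, this]

lemma gam_mul {n : ℕ} (A : Matrix (Fin n) (Fin n) ℂ) {U : Matrix (Fin n) (Fin n) ℂ}
    (hU : UniUpper U) : gam (A * U) = gam A * gam U := by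
  have h := shiftS_transpose_mul_shiftS_mul hU
  unfold gam
  generalize shiftS n = S at *
  have h2 : S * (A - 1) * Sᵀ * (S * (U - 1) * Sᵀ) = S * ((A - 1) * (U - 1)) * Sᵀ := by
    calc S * (A - 1) * Sᵀ * (S * (U - 1) * Sᵀ)
        = S * (A - 1) * (Sᵀ * (S * (U - 1))) * Sᵀ := by noncomm_ring
      _ = S * ((A - 1) * (U - 1)) * Sᵀ := by rw [h]; noncomm_ring
  have h3 : (1 + S * (A - 1) * Sᵀ) * (1 + S * (U - 1) * Sᵀ)
      = 1 + S * (A - 1) * Sᵀ + S * (U - 1) * Sᵀ + S * (A - 1) * Sᵀ * (S * (U - 1) * Sᵀ) := by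
    noncomm_ring
  rw [h3, h2]
  noncomm_ring

lemma TopRowsOne.gam {n m : ℕ} {U : Matrix (Fin n) (Fin n) ℂ} (hU : TopRowsOne m U) :
    TopRowsOne (m + 1) (gam U) := by
  intro i j hi
  have h : ∀ l, (shiftS n * (U - 1)) i l = 0 := by
    intro l
    rw [Matrix.mul_apply]
    refine Finset.sum_eq_zero fun p _ => ?_
    by_cases hp : (i:ℕ) = p + 1
    · rw [Matrix.sub_apply, hU p l (by omega), sub_self, mul_zero]
    · simp [shiftS, hp]
  unfold _root_.gam
  rw [Matrix.add_apply, Matrix.mul_apply, Finset.sum_eq_zero, add_zero]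
  intro l _
  rw [h, zero_mul]

lemma gam_eq_one {n m : ℕ} (hm : n ≤ m + 2) {U : Matrix (Fin n) (Fin n) ℂ} (hU : UniUpper U)
    (hT : TopRowsOne m U) : gam U = 1 := by
  have h : (U - 1) * (shiftS n)ᵀ = 0 := by
    ext i j
    rw [Matrix.mul_apply, Matrix.zero_apply]
    refine Finset.sum_eq_zero fun l _ => ?_
    by_cases hl : (j:ℕ) = l + 1
    · by_cases hi : (i:ℕ) < m
      · rw [Matrix.sub_apply, hT i l hi, sub_self, zero_mul]
      · -- here `l ≤ n - 2 ≤ m ≤ i`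
        rw [hU.sub_one_apply (by omega), zero_mul]
    · simp [shiftS, hl]
  rw [gam, Matrix.mul_assoc, h, Matrix.mul_zero, add_zero]

lemma TopRowsOne.of_mul_eq {n m : ℕ} {C G U C' : Matrix (Fin n) (Fin n) ℂ} (hC : InvLower C)
    (hC' : InvLower C') (hU : UniUpper U) (hG : TopRowsOne m G) (h : C * G = U * C') :
    TopRowsOne m U := by
  have hCG : ∀ i l : Fin n, (i:ℕ) < m → (C * G) i l = C i l := by
    intro i l hi
    conv_rhs => rw [← Matrix.mul_one C]
    rw [Matrix.mul_apply, Matrix.mul_apply]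
    refine Finset.sum_congr rfl fun p _ => ?_
    by_cases hp : (i:ℕ) < p
    · rw [hC.1 i p hp, zero_mul, zero_mul]
    · rw [hG p l (by omega)]
  have hUe : U = C * G * C'⁻¹ := by
    rw [h, Matrix.mul_assoc, Matrix.mul_nonsing_inv _ hC'.2, Matrix.mul_one]
  have hlow : (C * C'⁻¹).BlockTriangular OrderDual.toDual := by
    have := Matrix.invertibleOfIsUnitDet C' hC'.2
    have h1 : C.BlockTriangular OrderDual.toDual := fun i j hij => hC.1 i j hij
    have h2 : C'.BlockTriangular OrderDual.toDual := fun i j hij => hC'.1 i j hij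
    exact h1.mul (Matrix.blockTriangular_inv_of_blockTriangular h2)
  intro i j hi
  rcases lt_trichotomy i j with hij | rfl | hij
  · rw [Matrix.one_apply_ne hij.ne, ← hlow (i := i) (j := j) hij, hUe, Matrix.mul_apply,
      Matrix.mul_apply]
    exact Finset.sum_congr rfl fun l _ => by rw [hCG i l hi]
  · rw [hU.2, Matrix.one_apply_eq]
  · rw [hU.1 i j hij, Matrix.one_apply_ne (ne_of_gt hij)]

/-- if the sequence `Y_0 = X`, `Y_{k+1} = X ⬝ 𝛄(B_k)` is defined for all `k`
(each `Y_k` factoring as `B_k C_k` with `B_k` unipotent upper-triangular and `C_k` invertible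
lower-triangular), then it stabilizes at `k = n - 2`. -/
theorem Y_stabilizes (n : ℕ) (hn : 2 ≤ n) (X : Matrix (Fin n) (Fin n) ℂ) (hX : IsUnit X.det)
    (Y B C : ℕ → Matrix (Fin n) (Fin n) ℂ)
    (hY0 : Y 0 = X)
    (hfac : ∀ k, Y k = B k * C k)
    (hB : ∀ k, UniUpper (B k)) (hC : ∀ k, InvLower (C k))
    (hrec : ∀ k, Y (k+1) = X * gam (B k)) :
    ∀ k, n - 2 ≤ k → Y k = Y (n-2) := by
  choose U hU hBU using fun k => (hB k).exists_eq_mul (hB (k + 1))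
  have hstep : ∀ k, Y (k + 2) = Y (k + 1) * gam (U k) := fun k => by
    rw [hrec (k + 1), hrec k, hBU k, gam_mul _ (hU k), Matrix.mul_assoc]
  -- cancelling `B k` from `Y (k + 1) = Y k * G`
  have hcancel : ∀ k G, Y (k + 1) = Y k * G → C k * G = U k * C (k + 1) := by
    intro k G h
    rw [hfac (k + 1), hfac k, hBU k, Matrix.mul_assoc, Matrix.mul_assoc] at h
    have hinv := Matrix.nonsing_inv_mul _ (hB k).isUnit_det
    have h' := congrArg (fun M => (B k)⁻¹ * M) h
    simp only [← Matrix.mul_assoc, hinv, Matrix.one_mul] at h'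
    exact h'.symm
  have hY1 : Y 1 = Y 0 * gam (B 0) := by rw [hrec 0, hY0]
  have hzero : ∀ A : Matrix (Fin n) (Fin n) ℂ, TopRowsOne 0 A :=
    fun A i j h => absurd h (Nat.not_lt_zero _)
  have hT : ∀ k, TopRowsOne (k + 1) (U k) := by
    intro k
    induction k with
    | zero =>
      exact TopRowsOne.of_mul_eq (hC 0) (hC 1) (hU 0) (hzero (B 0)).gam (hcancel 0 _ hY1)
    | succ k ih =>
      exact TopRowsOne.of_mul_eq (hC (k + 1)) (hC (k + 2)) (hU (k + 1)) ih.gam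
        (hcancel (k + 1) _ (hstep k))
  have hconst : ∀ k, n - 2 ≤ k → Y (k + 1) = Y k := by
    intro k hk
    cases k with
    | zero => rw [hY1, gam_eq_one (by omega) (hB 0) (hzero _), Matrix.mul_one]
    | succ k => rw [hstep k, gam_eq_one (by omega) (hU k) (hT k), Matrix.mul_one]
  intro k hk
  induction k, hk using Nat.le_induction with
  | base => rfl
  | succ k hk ih => rw [hconst k hk, ih]

end
end

section
/- Let n ≥ 3 and X ∈ GL_n(ℂ), and suppose the recursively defined sequence Y_0 = X, Y_{k+1} = X·𝛄(B_k) is defined for all k ≥ 0, i.e. each Y_k admits a factorization Y_k = B_k C_k with B_k unipotent upper-triangular and C_k invertible lower-triangular. Then for all 3 ≤ α ≤ β ≤ n and every subset I ⊆ [1,n] with |I| = β−α+1: det (Y_{α−2})_I^{[α,β]} · ∏_{s=1}^{α−2} det (Y_{α−2−s})_{[α−s,n]}^{[α−s,n]} = Σ det X_I^{I_1} · det X_{γ*(I_1)∪[β,n]}^{I_2} · ∏_{m=2}^{α−2} det X_{γ*(I_m)∪{n}}^{I_{m+1}}, where the sum is over all tuples (I_1,…,I_{α−2}) of subsets of [2,n]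 with |I_1| = β−α+1 and |I_m| = n−α+m for 2 ≤ m ≤ α−2, such that γ*(I_1) is disjoint from [β,n], with the convention I_{α−1} = [2,n]. -/
/-!
The formula comes from iterating one identity. Write `Z = X * gam B` where `Y = B * C`. The
Cauchy–Binet formula (`minor_mul`) expands a minor of `Z` on the columns `[a+1, b+1]` as a sum over
`K` of `minor X R K` times a minor of `gam B` with rows `K`. As `gam B` is the block sum of `1` and
the leading part of `B`, the latter vanishes if `K` contains the first index, and otherwise equals
the minor of `B` with rows `γ*(K)` and columns `[a, b]` (`minor_gam`).

A minor of `B` on the columns `[a, b]` is in turn a quotient of minors of `Y`. Since `B` is unipotent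
upper-triangular, adjoining the rows and columns `> b` does not change it when its rows are `≤ b`,
and it vanishes if some row exceeds `b`. Since `C` is lower-triangular, passing from `B` to `B * C`
multiplies every minor on the columns `≥ a` by the same factor, which is the principal minor of
`Y` on the indices `≥ a` (`minor_factor`). The product of the principal minors in the theorem
clears these denominators, and `minor_step` records the resulting identity.

After the first step the minors of `Y` that appear have all columns `≥ a`, so that the identity
applies again with `b` the last index; `minor_Y_eq_chainSum` iterates it down to `Y 0 = X`, giving a
nested sum `chainSum`, which `chainSum_eq_sum` unfolds into a sum over tuples of index sets.
-/

open Matrix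

noncomputable section

/-- Determinant of the submatrix of `U` with row set `R` and column set `C` (both taken in
increasing order); `0` if the cardinalities do not match. -/
def minor {N : ℕ} (U : Matrix (Fin N) (Fin N) ℂ) (R C : Finset (Fin N)) : ℂ :=
  if h : C.card = R.card then
    Matrix.det (Matrix.of fun a b : Fin R.card =>
      U ((R.orderIsoOfFin rfl) a).1 ((C.orderIsoOfFin h) b).1)
  else 0

/-- `{x : a ≤ x}` as a finset of 0-based indices. -/
def segGe (N a : ℕ) : Finset (Fin N) := Finset.univ.filter fun x => a ≤ (x:ℕ)

/-- `{x : a ≤ x ≤ b}` as a finset of 0-based indices. -/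
def seg (N a b : ℕ) : Finset (Fin N) := Finset.univ.filter fun x => a ≤ (x:ℕ) ∧ (x:ℕ) ≤ b

/-- The map `γ*`: subtract one from every element. -/
def shiftDown {N : ℕ} (S : Finset (Fin N)) : Finset (Fin N) :=
  S.image fun x : Fin N => ⟨(x:ℕ) - 1, lt_of_le_of_lt (Nat.sub_le _ _) x.isLt⟩

/-- Extend a tuple of index sets by the full set `[2, n]` (0-based: all indices `≥ 1`). -/
def extT {N p : ℕ} (T : Fin p → Finset (Fin N)) (t : ℕ) : Finset (Fin N) :=
  if h : t < p then T ⟨t, h⟩ else segGe N 1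

/-! ### The Cauchy–Binet formula and minors -/

open Finset in
/-- Expansion of `det (A * B)` by multilinearity in the rows, over all choices `p` of one row of
`B` for each row of `A`. -/
theorem cauchyBinet_aux {k N : ℕ} (A : Matrix (Fin k) (Fin N) ℂ) (B : Matrix (Fin N) (Fin k) ℂ) :
    (A * B).det = ∑ p : Fin k → Fin N, (∏ i, A i (p i)) * (B.submatrix p id).det := by
  have h : (A * B : Matrix (Fin k) (Fin k) ℂ) = fun i => ∑ j, A i j • B j := by
    ext i j
    simp [Matrix.mul_apply, Finset.sum_apply]
  rw [h]
  have h2 := (detRowAlternating (R := ℂ) (n := Fin k)).toMultilinearMap.map_sum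
    (fun (i : Fin k) (j : Fin N) => A i j • B j)
  refine Eq.trans h2 ?_
  refine Finset.sum_congr rfl fun p _ => ?_
  exact (detRowAlternating (R := ℂ) (n := Fin k)).toMultilinearMap.map_smul_univ
    (fun i => A i (p i)) (fun i => B (p i))

open Finset in
/-- The choices `p` with image `K` are the increasing enumeration of `K` composed with a
permutation, so they contribute a single product of two determinants. -/
theorem cauchyBinet_fiber {k N : ℕ} (A : Matrix (Fin k) (Fin N) ℂ) (B : Matrix (Fin N) (Fin k) ℂ)
    (K : Finset (Fin N)) (hK : K.card = k) :
    (∑ p : Fin k → Fin N with univ.image p = K, (∏ i, A i (p i)) * (B.submatrix p id).det)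
      = (A.submatrix id (K.orderEmbOfFin hK)).det * (B.submatrix (K.orderEmbOfFin hK) id).det := by
  have hs : (∑ p : Fin k → Fin N with univ.image p = K, (∏ i, A i (p i)) * (B.submatrix p id).det)
      = ∑ σ : Equiv.Perm (Fin k), (∏ i, A i (K.orderEmbOfFin hK (σ i))) *
        (B.submatrix (fun i => K.orderEmbOfFin hK (σ i)) id).det := by
    symm
    refine Finset.sum_nbij (fun σ i => K.orderEmbOfFin hK (σ i)) ?_ ?_ ?_ (fun _ _ => rfl)
    · intro σ _
      simp only [mem_filter, mem_univ, true_and]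
      ext x
      have := Finset.range_orderEmbOfFin K hK
      simp only [mem_image, mem_univ, true_and]
      rw [← mem_coe, ← this]
      constructor
      · rintro ⟨a, rfl⟩; exact ⟨_, rfl⟩
      · rintro ⟨a, rfl⟩; exact ⟨σ.symm a, by simp⟩
    · intro σ _ τ _ h
      ext i
      exact congrArg Fin.val ((K.orderEmbOfFin hK).injective (congrFun h i))
    · intro p hp
      have hp' : univ.image p = K := by simpa using hp
      have hmem : ∀ i, p i ∈ K := fun i => hp' ▸ mem_image_of_mem p (mem_univ i)
      have hinj : Function.Injective p := by
        have : (univ.image p).card = (univ : Finset (Fin k)).card := by simp [hp', hK]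
        exact fun a b hab => Finset.card_image_iff.1 this (by simp) (by simp) hab
      let q : Fin k → Fin k := fun i => (K.orderIsoOfFin hK).symm ⟨p i, hmem i⟩
      have hq : Function.Injective q := by
        intro a b hab
        have := (K.orderIsoOfFin hK).symm.injective hab
        exact hinj (by simpa using this)
      refine ⟨Equiv.ofBijective q (Finite.injective_iff_bijective.1 hq), by simp, ?_⟩
      funext i
      simp only [Equiv.ofBijective_apply, q]
      rw [← Finset.coe_orderIsoOfFin_apply]
      simp
  rw [hs, ← Matrix.det_transpose (A.submatrix id _), Matrix.det_apply, Finset.sum_mul]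
  refine Finset.sum_congr rfl fun σ _ => ?_
  have := Matrix.det_permute σ (B.submatrix (K.orderEmbOfFin hK) id)
  rw [Matrix.submatrix_submatrix] at this
  change _ * ((B.submatrix (K.orderEmbOfFin hK ∘ σ) (id ∘ id)).det) = _
  rw [this]
  simp only [Matrix.transpose_apply, Matrix.submatrix_apply, id, Units.smul_def, zsmul_eq_mul]
  ring

open Finset in
/-- The Cauchy–Binet formula, with subsets enumerated in increasing order. Non-injective choices
of rows contribute nothing, having two equal rows. -/
theorem cauchyBinet {k N : ℕ} (A : Matrix (Fin k) (Fin N) ℂ) (B : Matrix (Fin N) (Fin k) ℂ) :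
    (A * B).det = ∑ K ∈ (powersetCard k (univ : Finset (Fin N))).attach,
      (A.submatrix id (K.1.orderEmbOfFin (mem_powersetCard.1 K.2).2)).det *
      (B.submatrix (K.1.orderEmbOfFin (mem_powersetCard.1 K.2).2) id).det := by
  rw [cauchyBinet_aux, ← Finset.sum_filter_of_ne (p := fun p => Function.Injective p)]
  · rw [← Finset.sum_fiberwise_of_maps_to (t := powersetCard k (univ : Finset (Fin N)))
      (g := fun p => univ.image p), ← Finset.sum_attach]
    · refine Finset.sum_congr rfl fun K _ => ?_
      rw [← cauchyBinet_fiber]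
      refine Finset.sum_congr ?_ fun _ _ => rfl
      ext p
      simp only [mem_filter, mem_univ, true_and, and_iff_right_iff_imp]
      intro hp
      have : (univ.image p).card = (univ : Finset (Fin k)).card := by
        simp [hp, (mem_powersetCard.1 K.2).2]
      exact fun a b hab => Finset.card_image_iff.1 this (by simp) (by simp) hab
    · intro p hp
      simp only [mem_filter, mem_univ, true_and] at hp
      simp [mem_powersetCard, Finset.card_image_of_injective _ hp]
  · intro p _ hne
    by_contra hinj
    simp only [Function.Injective, not_forall] at hinj
    obtain ⟨a, b, hab, hne'⟩ := hinj
    refine hne ?_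
    rw [Matrix.det_zero_of_row_eq hne', mul_zero]
    ext j; simp [hab]

/-- Any increasing enumerations of the row and column sets compute the minor. -/
theorem minor_eq_det {N : ℕ} {ι : Type*} [Fintype ι] [LinearOrder ι]
    (U : Matrix (Fin N) (Fin N) ℂ) (R C : Finset (Fin N)) (f g : ι → Fin N)
    (hf : StrictMono f) (hg : StrictMono g) (hfR : Finset.univ.image f = R)
    (hgC : Finset.univ.image g = C) : minor U R C = (U.submatrix f g).det := by
  have hR : R.card = Fintype.card ι := by
    rw [← hfR, Finset.card_image_of_injective _ hf.injective]; rfl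
  have hC : C.card = R.card := by
    rw [hR, ← hgC, Finset.card_image_of_injective _ hg.injective]; rfl
  have e := monoEquivOfFin ι hR.symm
  have h1 : f ∘ e = R.orderEmbOfFin rfl :=
    Finset.orderEmbOfFin_unique rfl (fun x => by simp [← hfR]) (hf.comp e.strictMono)
  have h2 : g ∘ e = C.orderEmbOfFin hC :=
    Finset.orderEmbOfFin_unique hC (fun x => by simp [← hgC]) (hg.comp e.strictMono)
  rw [minor, dif_pos hC, ← Matrix.det_submatrix_equiv_self e.toEquiv, Matrix.submatrix_submatrix]
  congr 1
  ext a b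
  have h1' := congrFun h1 a
  have h2' := congrFun h2 b
  simp only [Function.comp] at h1' h2'
  simp [h1', h2']

theorem minor_eq_det_orderEmb {N k : ℕ} (U : Matrix (Fin N) (Fin N) ℂ) (R C : Finset (Fin N))
    (hR : R.card = k) (hC : C.card = k) :
    minor U R C = (U.submatrix (R.orderEmbOfFin hR) (C.orderEmbOfFin hC)).det :=
  minor_eq_det U R C _ _ (OrderEmbedding.strictMono _) (OrderEmbedding.strictMono _)
    (by simp) (by simp)

theorem minor_of_card_ne {N : ℕ} (U : Matrix (Fin N) (Fin N) ℂ) (R C : Finset (Fin N))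
    (h : C.card ≠ R.card) : minor U R C = 0 := by
  rw [minor, dif_neg h]

open Finset in
/-- Cauchy–Binet for `minor`; both sides vanish when the cardinalities of `R` and `C` differ. -/
theorem minor_mul {N : ℕ} (A B : Matrix (Fin N) (Fin N) ℂ) (R C : Finset (Fin N)) :
    minor (A * B) R C = ∑ K ∈ powersetCard R.card univ, minor A R K * minor B K C := by
  by_cases h : C.card = R.card
  · rw [minor_eq_det_orderEmb _ R C rfl h, Matrix.submatrix_mul _ _ _ id _ Function.bijective_id,
      cauchyBinet, ← Finset.sum_attach (powersetCard R.card univ)]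
    refine Finset.sum_congr rfl fun K _ => ?_
    have hK := (mem_powersetCard.1 K.2).2
    rw [minor_eq_det_orderEmb A R K rfl hK, minor_eq_det_orderEmb B K C hK h]
    rfl
  · rw [minor_of_card_ne _ _ _ h]
    refine (Finset.sum_eq_zero fun K hK => ?_).symm
    rw [minor_of_card_ne B K C, mul_zero]
    rwa [(mem_powersetCard.1 hK).2]

theorem minor_eq_zero_of_row {N : ℕ} (U : Matrix (Fin N) (Fin N) ℂ) (R C : Finset (Fin N))
    (r : Fin N) (hr : r ∈ R) (h : ∀ c ∈ C, U r c = 0) : minor U R C = 0 := by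
  by_cases hc : C.card = R.card
  · rw [minor, dif_pos hc]
    refine Matrix.det_eq_zero_of_row_eq_zero ((R.orderIsoOfFin rfl).symm ⟨r, hr⟩) fun b => ?_
    simp only [Matrix.of_apply, OrderIso.apply_symm_apply]
    exact h _ (C.orderIsoOfFin hc b).2
  · exact minor_of_card_ne U R C hc

/-! ### Minors of triangular products -/

/-- Block-triangular factorization of a minor. The lexicographic sum of the two index types
enumerates `R ∪ D` and `C ∪ D` increasingly, because `D` lies above both `R` and `C`. -/
theorem minor_block {N : ℕ} (U : Matrix (Fin N) (Fin N) ℂ) (R C D : Finset (Fin N))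
    (hR : ∀ x ∈ R, ∀ y ∈ D, x < y) (hC : ∀ x ∈ C, ∀ y ∈ D, x < y)
    (hU : ∀ r ∈ D, ∀ c ∈ C, U r c = 0) :
    minor U (R ∪ D) (C ∪ D) = minor U R C * minor U D D := by
  have hRD : Disjoint R D := Finset.disjoint_left.2 fun x hx hy => lt_irrefl _ (hR x hx x hy)
  have hCD : Disjoint C D := Finset.disjoint_left.2 fun x hx hy => lt_irrefl _ (hC x hx x hy)
  by_cases h : C.card = R.card
  · let e : Fin R.card → Fin N := R.orderEmbOfFin rfl
    let e' : Fin R.card → Fin N := C.orderEmbOfFin h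
    let d : Fin D.card → Fin N := D.orderEmbOfFin rfl
    have he' : ∀ i, e' i ∈ C := Finset.orderEmbOfFin_mem C h
    have hd : ∀ i, d i ∈ D := Finset.orderEmbOfFin_mem D rfl
    have key : ∀ (E : Finset (Fin N)) (w : Fin R.card → Fin N), StrictMono w →
        Finset.univ.image w = E → (∀ x ∈ E, ∀ y ∈ D, x < y) →
        StrictMono (fun x : Fin R.card ⊕ₗ Fin D.card => Sum.elim w d (ofLex x)) ∧
        Finset.univ.image (fun x : Fin R.card ⊕ₗ Fin D.card => Sum.elim w d (ofLex x)) = E ∪ D := by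
      intro E w hw hwE hE
      have hwm : ∀ i, w i ∈ E := fun i => hwE ▸ Finset.mem_image_of_mem w (Finset.mem_univ i)
      constructor
      · intro x y hxy
        cases hxy with
        | inl h => exact hw h
        | inr h => exact (D.orderEmbOfFin rfl).strictMono h
        | sep => exact hE _ (hwm _) _ (hd _)
      · ext x
        have hdD : x ∈ D ↔ ∃ i, d i = x := by
          rw [← Finset.mem_coe, ← Finset.range_orderEmbOfFin D rfl, Set.mem_range]
        rw [Finset.mem_union, hdD, ← hwE]
        simp only [Finset.mem_image, Finset.mem_univ, true_and]
        constructor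
        · rintro ⟨a, rfl⟩
          rcases ha : ofLex a with i | i
          · exact Or.inl ⟨i, rfl⟩
          · exact Or.inr ⟨i, rfl⟩
        · rintro (⟨i, rfl⟩ | ⟨i, rfl⟩)
          · exact ⟨toLex (Sum.inl i), rfl⟩
          · exact ⟨toLex (Sum.inr i), rfl⟩
    obtain ⟨h1, h2⟩ := key R e (OrderEmbedding.strictMono _) (by simp [e]) hR
    obtain ⟨h3, h4⟩ := key C e' (OrderEmbedding.strictMono _) (by simp [e']) hC
    rw [minor_eq_det U _ _ _ _ h1 h3 h2 h4, minor_eq_det_orderEmb U R C rfl h,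
      minor_eq_det_orderEmb U D D rfl rfl, ← Matrix.det_submatrix_equiv_self toLex,
      ← Matrix.det_fromBlocks_zero₂₁ _ (U.submatrix e d)]
    congr 1
    ext i j
    rcases i with i | i <;> rcases j with j | j
    · rfl
    · rfl
    · exact hU _ (hd _) _ (he' _)
    · rfl
  · rw [minor_of_card_ne U R C h, zero_mul, minor_of_card_ne]
    rw [Finset.card_union_of_disjoint hRD, Finset.card_union_of_disjoint hCD]
    omega

theorem minor_uniUpper_self {n : ℕ} {B : Matrix (Fin n) (Fin n) ℂ} (hB : UniUpper B)
    (D : Finset (Fin n)) : minor B D D = 1 := by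
  rw [minor_eq_det_orderEmb B D D rfl rfl, Matrix.det_of_isUpperTriangular]
  · simp [hB.2]
  · intro i j hij
    exact hB.1 _ _ ((D.orderEmbOfFin rfl).strictMono hij)

theorem card_segGe (n a : ℕ) : (segGe n a).card = n - a := by
  have h : (segGe n a).map Fin.valEmbedding = Finset.Ico a n := by
    ext x
    simp only [segGe, Finset.mem_map, Finset.mem_filter, Finset.mem_univ, true_and,
      Fin.valEmbedding_apply, Finset.mem_Ico]
    constructor
    · rintro ⟨y, hy, rfl⟩; exact ⟨hy, y.2⟩
    · rintro ⟨h1, h2⟩; exact ⟨⟨x, h2⟩, h1, rfl⟩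
  rw [← Finset.card_map, h, Nat.card_Ico]

/-- Right multiplication by a lower-triangular matrix scales all minors on the final columns
`[a, n)` by one common factor. -/
theorem minor_mul_lower {n : ℕ} {B C : Matrix (Fin n) (Fin n) ℂ} (hC : InvLower C)
    (R : Finset (Fin n)) (a : ℕ) :
    minor (B * C) R (segGe n a) = minor B R (segGe n a) * minor C (segGe n a) (segGe n a) := by
  by_cases h : (segGe n a).card = R.card
  · rw [minor_mul]
    refine Finset.sum_eq_single_of_mem _ (by simp [Finset.mem_powersetCard, h]) ?_
    intro K hK hne
    have hKc := (Finset.mem_powersetCard.1 hK).2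
    have hsub : ¬ K ⊆ segGe n a := fun hs => hne (Finset.eq_of_subset_of_card_le hs (by omega))
    obtain ⟨x, hxK, hx⟩ := Finset.not_subset.1 hsub
    rw [minor_eq_zero_of_row C K _ x hxK, mul_zero]
    intro c hc
    simp only [segGe, Finset.mem_filter, Finset.mem_univ, true_and] at hx hc
    exact hC.1 _ _ (by omega)
  · rw [minor_of_card_ne _ _ _ h, minor_of_card_ne _ _ _ h, zero_mul]

/-- Minors of the unipotent factor on an interval of columns, cleared of denominators, are
minors of the product `B * C` on final columns. -/
theorem minor_factor {n : ℕ} {B C : Matrix (Fin n) (Fin n) ℂ} (hB : UniUpper B)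
    (hC : InvLower C) (J : Finset (Fin n)) (a b : ℕ) (hab : a ≤ b + 1)
    (hJ : Disjoint J (segGe n (b + 1))) :
    minor B J (seg n a b) * minor (B * C) (segGe n a) (segGe n a)
      = minor (B * C) (J ∪ segGe n (b + 1)) (segGe n a) := by
  rw [minor_mul_lower hC, minor_mul_lower hC, minor_uniUpper_self hB, one_mul]
  congr 1
  have hsplit : segGe n a = seg n a b ∪ segGe n (b + 1) := by
    ext x; simp only [segGe, seg, Finset.mem_filter, Finset.mem_union, Finset.mem_univ, true_and]
    omega
  rw [hsplit, minor_block, minor_uniUpper_self hB, mul_one]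
  · intro x hx y hy
    have := Finset.disjoint_left.1 hJ hx
    simp only [segGe, Finset.mem_filter, Finset.mem_univ, true_and] at this hy
    exact Fin.lt_def.2 (by omega)
  · intro x hx y hy
    simp only [segGe, seg, Finset.mem_filter, Finset.mem_univ, true_and] at hx hy
    exact Fin.lt_def.2 (by omega)
  · intro x hx y hy
    simp only [segGe, seg, Finset.mem_filter, Finset.mem_univ, true_and] at hx hy
    exact hB.1 _ _ (by omega)

/-! ### The operation `gam` and one step of the recursion -/

theorem shiftS_mul_apply {n : ℕ} (M : Matrix (Fin n) (Fin n) ℂ) (i i' j : Fin n)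
    (hi : (i : ℕ) = i' + 1) : (shiftS n * M) i j = M i' j := by
  rw [Matrix.mul_apply, Finset.sum_eq_single i']
  · simp [shiftS, hi]
  · intro k _ hk
    have : ¬ (i : ℕ) = k + 1 := fun h => hk (Fin.ext (by omega))
    simp [shiftS, this]
  · simp

/-- Below the first row and right of the first column, `gam B` is `B` shifted diagonally. -/
theorem gam_apply_succ {n : ℕ} (B : Matrix (Fin n) (Fin n) ℂ) (i i' j j' : Fin n)
    (hi : (i : ℕ) = i' + 1) (hj : (j : ℕ) = j' + 1) : gam B i j = B i' j' := by
  have h : (shiftS n * (B - 1) * (shiftS n)ᵀ) i j = (B - 1) i' j' := by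
    rw [← Matrix.transpose_apply (shiftS n * (B - 1) * (shiftS n)ᵀ), Matrix.transpose_mul,
      Matrix.transpose_transpose, shiftS_mul_apply _ j j' i hj, Matrix.transpose_apply,
      shiftS_mul_apply _ i i' j' hi]
  rw [gam, Matrix.add_apply, h, Matrix.sub_apply]
  have : (1 : Matrix (Fin n) (Fin n) ℂ) i j = (1 : Matrix (Fin n) (Fin n) ℂ) i' j' := by
    simp only [Matrix.one_apply, Fin.ext_iff, hi, hj, Nat.add_right_cancel_iff]
  rw [this]; ring

theorem gam_apply_zero {n : ℕ} (B : Matrix (Fin n) (Fin n) ℂ) (i j : Fin n)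
    (hi : (i : ℕ) = 0) (hj : 1 ≤ (j : ℕ)) : gam B i j = 0 := by
  have h : (shiftS n * (B - 1) * (shiftS n)ᵀ) i j = 0 := by
    rw [Matrix.mul_assoc, Matrix.mul_apply]
    exact Finset.sum_eq_zero fun k _ => by simp [shiftS, hi]
  rw [gam, Matrix.add_apply, h, Matrix.one_apply_ne (fun h => by rw [Fin.ext_iff] at h; omega),
    add_zero]

theorem minor_gam {n : ℕ} (B : Matrix (Fin n) (Fin n) ℂ) (K : Finset (Fin n)) (a b : ℕ)
    (hb : b + 1 < n) (hK : ∀ x ∈ K, 1 ≤ (x : ℕ)) :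
    minor (gam B) K (seg n (a + 1) (b + 1)) = minor B (shiftDown K) (seg n a b) := by
  have hdown : ∀ L : Finset (Fin n), (∀ x ∈ L, 1 ≤ (x : ℕ)) → (shiftDown L).card = L.card := by
    intro L hL
    refine Finset.card_image_of_injOn fun x hx y hy hxy => ?_
    have h1 := hL x hx
    have h2 := hL y hy
    simp only [Fin.mk.injEq] at hxy
    exact Fin.ext (by omega)
  have hseg : seg n a b = shiftDown (seg n (a + 1) (b + 1)) := by
    ext x
    simp only [seg, shiftDown, Finset.mem_filter, Finset.mem_univ, true_and, Finset.mem_image]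
    constructor
    · rintro ⟨h1, h2⟩
      exact ⟨⟨x + 1, by omega⟩, ⟨by simp; omega, by simp; omega⟩, by simp⟩
    · rintro ⟨y, ⟨h1, h2⟩, rfl⟩
      simp; omega
  have hS : ∀ x ∈ seg n (a + 1) (b + 1), 1 ≤ (x : ℕ) := by
    intro x hx
    simp only [seg, Finset.mem_filter, Finset.mem_univ, true_and] at hx
    omega
  by_cases h : (seg n (a + 1) (b + 1)).card = K.card
  · let dn : Fin n → Fin n := fun x => ⟨(x : ℕ) - 1, lt_of_le_of_lt (Nat.sub_le _ _) x.isLt⟩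
    have key : ∀ (L : Finset (Fin n)) (hL : L.card = K.card), (∀ x ∈ L, 1 ≤ (x : ℕ)) →
        StrictMono (fun i => dn (L.orderEmbOfFin hL i)) ∧
        Finset.univ.image (fun i => dn (L.orderEmbOfFin hL i)) = shiftDown L := by
      intro L hL hL1
      constructor
      · intro i j hij
        have h1 := (L.orderEmbOfFin hL).strictMono hij
        have h2 := hL1 _ (Finset.orderEmbOfFin_mem L hL i)
        rw [Fin.lt_def] at h1 ⊢
        simp only [dn]
        omega
      · have := Finset.image_orderEmbOfFin_univ L hL
        unfold shiftDown
        conv_rhs => rw [← this]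
        rw [Finset.image_image]
        rfl
    obtain ⟨h1, h2⟩ := key K rfl hK
    obtain ⟨h3, h4⟩ := key _ h hS
    rw [hseg, minor_eq_det B _ _ _ _ h1 h3 h2 h4, minor_eq_det_orderEmb _ _ _ rfl h]
    congr 1
    ext i j
    have hi := hK _ (Finset.orderEmbOfFin_mem K rfl i)
    have hj := hS _ (Finset.orderEmbOfFin_mem _ h j)
    exact gam_apply_succ B _ _ _ _ (by simp only [dn]; omega) (by simp only [dn]; omega)
  · rw [minor_of_card_ne _ _ _ h, minor_of_card_ne]
    rwa [hseg, hdown _ hS, hdown _ hK]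

/-- One step of the recursion: a minor of `X * gam B` on the columns `[a+1, b+1]`, times a principal
minor of `B * C`, in terms of minors of `X` and minors of `B * C` on the columns `≥ a`. -/
theorem minor_step {n : ℕ} (X : Matrix (Fin n) (Fin n) ℂ) {B C : Matrix (Fin n) (Fin n) ℂ}
    (hB : UniUpper B) (hC : InvLower C) (R : Finset (Fin n)) (a b : ℕ) (hab : a ≤ b + 1)
    (hb : b + 1 < n) :
    minor (X * gam B) R (seg n (a + 1) (b + 1)) * minor (B * C) (segGe n a) (segGe n a)
      = ∑ K ∈ Finset.univ.filter (fun K : Finset (Fin n) => (∀ x ∈ K, 1 ≤ (x : ℕ)) ∧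
            K.card = R.card ∧ Disjoint (shiftDown K) (segGe n (b + 1))),
          minor X R K * minor (B * C) (shiftDown K ∪ segGe n (b + 1)) (segGe n a) := by
  rw [minor_mul, Finset.sum_mul]
  symm
  refine Finset.sum_subset_zero_on_sdiff ?_ ?_ ?_
  · intro K hK
    simp only [Finset.mem_filter, Finset.mem_univ, true_and] at hK
    simp [Finset.mem_powersetCard, hK.2.1]
  · intro K hK
    simp only [Finset.mem_sdiff, Finset.mem_powersetCard, Finset.mem_filter, Finset.mem_univ,
      true_and, Finset.subset_univ] at hK
    obtain ⟨hc, hK⟩ := hK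
    suffices minor (gam B) K (seg n (a + 1) (b + 1)) = 0 by rw [this, mul_zero, zero_mul]
    by_cases h1 : ∀ x ∈ K, 1 ≤ (x : ℕ)
    · rw [minor_gam B K a b hb h1]
      have hd : ¬ Disjoint (shiftDown K) (segGe n (b + 1)) := fun hd => hK ⟨h1, hc, hd⟩
      obtain ⟨x, hx, hx'⟩ := Finset.not_disjoint_iff.1 hd
      refine minor_eq_zero_of_row B _ _ x hx fun c hc => hB.1 _ _ ?_
      simp only [segGe, seg, Finset.mem_filter, Finset.mem_univ, true_and] at hx' hc
      omega
    · push Not at h1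
      obtain ⟨x, hx, hx1⟩ := h1
      refine minor_eq_zero_of_row _ _ _ x hx fun c hc => gam_apply_zero B x c (by omega) ?_
      simp only [seg, Finset.mem_filter, Finset.mem_univ, true_and] at hc
      omega
  · intro K hK
    simp only [Finset.mem_filter, Finset.mem_univ, true_and] at hK
    rw [minor_gam B K a b hb hK.1, ← minor_factor hB hC _ a b hab hK.2.2]
    ring

/-! ### Iteration of the step and sums over tuples -/

/-- The nested sum obtained by iterating `minor_step` with all columns from `p + 1` on (0-based):
`p` index sets contained in `[1, n)` are summed over, and the last column set is `[1, n)`. -/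
def chainSum {n : ℕ} (X : Matrix (Fin n) (Fin n) ℂ) : ℕ → Finset (Fin n) → ℂ
  | 0, J => minor X J (segGe n 1)
  | p + 1, J => ∑ K ∈ Finset.univ.filter (fun K : Finset (Fin n) =>
        (∀ x ∈ K, 1 ≤ (x : ℕ)) ∧ K.card = n - (p + 2)),
      minor X J K * chainSum X p (shiftDown K ∪ segGe n (n - 1))

theorem seg_last (n a : ℕ) : seg n a (n - 1) = segGe n a := by
  ext x
  have := x.isLt
  simp only [segGe, seg, Finset.mem_filter, Finset.mem_univ, true_and]
  omega

/-- For the last index the disjointness condition of `minor_step` is automatic. -/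
theorem disjoint_shiftDown_last {n : ℕ} (K : Finset (Fin n)) (hK : ∀ x ∈ K, 1 ≤ (x : ℕ)) :
    Disjoint (shiftDown K) (segGe n (n - 1)) := by
  refine Finset.disjoint_left.2 fun x hx hx' => ?_
  simp only [shiftDown, Finset.mem_image] at hx
  obtain ⟨y, hy, rfl⟩ := hx
  have := hK y hy
  have := y.isLt
  simp only [segGe, Finset.mem_filter, Finset.mem_univ, true_and] at hx'
  omega

/-- The case `β = n` of the formula, as a nested sum. The row set `J` is arbitrary: both sides vanish
unless `J` has the cardinality `n - (p + 1)` of the column set. -/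
theorem minor_Y_eq_chainSum {n : ℕ} (X : Matrix (Fin n) (Fin n) ℂ)
    (Y B C : ℕ → Matrix (Fin n) (Fin n) ℂ) (hY0 : Y 0 = X)
    (hfac : ∀ k, Y k = B k * C k) (hB : ∀ k, UniUpper (B k)) (hC : ∀ k, InvLower (C k))
    (hrec : ∀ k, Y (k + 1) = X * gam (B k)) (p : ℕ) (hp : p + 2 ≤ n) (J : Finset (Fin n)) :
    minor (Y p) J (segGe n (p + 1))
        * ∏ i ∈ Finset.range p, minor (Y i) (segGe n (i + 1)) (segGe n (i + 1))
      = chainSum X p J := by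
  induction p generalizing J with
  | zero => simp [chainSum, hY0]
  | succ p ih =>
    by_cases hJ : J.card = n - (p + 2)
    · have hstep := minor_step X (hB p) (hC p) J (p + 1) (n - 2) (by omega) (by omega)
      rw [show n - 2 + 1 = n - 1 by omega, ← hfac, ← hrec, seg_last] at hstep
      rw [Finset.prod_range_succ, mul_comm (∏ i ∈ Finset.range p, _), ← mul_assoc, hstep,
        chainSum, Finset.sum_mul]
      refine Finset.sum_congr ?_ ?_
      · ext K
        simp only [Finset.mem_filter, Finset.mem_univ, true_and, hJ]
        exact ⟨fun h => ⟨h.1, h.2.1⟩, fun h => ⟨h.1, h.2, disjoint_shiftDown_last K h.1⟩⟩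
      · intro K _
        rw [mul_assoc, ih (by omega)]
    · rw [minor_of_card_ne _ _ _ (by rw [card_segGe]; omega), zero_mul, chainSum]
      refine (Finset.sum_eq_zero fun K hK => ?_).symm
      simp only [Finset.mem_filter, Finset.mem_univ, true_and] at hK
      rw [minor_of_card_ne X J K (by omega), zero_mul]

/-- A sum over tuples whose condition separates the first entry from the others is an iterated
sum. -/
theorem sum_filter_cons {A : Type*} [Fintype A] {p : ℕ} (P : A → Prop) [DecidablePred P]
    (P' : (Fin p → A) → Prop) [DecidablePred P'] (Q : (Fin (p + 1) → A) → Prop) [DecidablePred Q]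
    (hQ : ∀ a T, Q (Fin.cons a T) ↔ P a ∧ P' T) (f : (Fin (p + 1) → A) → ℂ) :
    ∑ T ∈ Finset.univ.filter Q, f T
      = ∑ a ∈ Finset.univ.filter P, ∑ T ∈ Finset.univ.filter P', f (Fin.cons a T) := by
  rw [Finset.sum_filter, ← (Fin.consEquiv (fun _ => A)).sum_comp, Fintype.sum_prod_type,
    Finset.sum_filter]
  refine Finset.sum_congr rfl fun a _ => ?_
  rw [Finset.sum_filter]
  by_cases ha : P a
  · rw [if_pos ha]
    refine Finset.sum_congr rfl fun T _ => ?_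
    simp [Fin.consEquiv, hQ, ha]
  · rw [if_neg ha]
    refine Finset.sum_eq_zero fun T _ => ?_
    simp [Fin.consEquiv, hQ, ha]

theorem extT_cons_zero {N p : ℕ} (K : Finset (Fin N)) (T : Fin p → Finset (Fin N)) :
    extT (Fin.cons K T : Fin (p + 1) → Finset (Fin N)) 0 = K := by
  simp [extT]

theorem extT_cons_succ {N p : ℕ} (K : Finset (Fin N)) (T : Fin p → Finset (Fin N)) (t : ℕ) :
    extT (Fin.cons K T : Fin (p + 1) → Finset (Fin N)) (t + 1) = extT T t := by
  unfold extT
  by_cases h : t < p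
  · rw [dif_pos h, dif_pos (by omega)]
    exact Fin.cons_succ (α := fun _ => Finset (Fin N)) K T ⟨t, h⟩
  · rw [dif_neg h, dif_neg (by omega)]

/-- `chainSum` as one sum over tuples, the entries of the tuple listed from the outermost sum
inwards. -/
theorem chainSum_eq_sum {n : ℕ} (X : Matrix (Fin n) (Fin n) ℂ) (p : ℕ) (hp : p + 2 ≤ n)
    (J : Finset (Fin n)) :
    chainSum X p J = ∑ T ∈ Finset.univ.filter (fun T : Fin p → Finset (Fin n) =>
          (∀ t, ∀ x ∈ T t, 1 ≤ (x : ℕ)) ∧ (∀ t : Fin p, (T t).card = n - (p + 1) + t)),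
        minor X J (extT T 0) * ∏ t ∈ Finset.range p,
          minor X (shiftDown (extT T t) ∪ segGe n (n - 1)) (extT T (t + 1)) := by
  induction p generalizing J with
  | zero => simp [chainSum, extT]
  | succ p ih =>
    rw [chainSum, sum_filter_cons (fun K : Finset (Fin n) =>
        (∀ x ∈ K, 1 ≤ (x : ℕ)) ∧ K.card = n - (p + 2)) (fun T : Fin p → Finset (Fin n) =>
          (∀ t, ∀ x ∈ T t, 1 ≤ (x : ℕ)) ∧ (∀ t : Fin p, (T t).card = n - (p + 1) + t))]
    · refine Finset.sum_congr rfl fun K _ => ?_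
      rw [ih (by omega), Finset.mul_sum]
      refine Finset.sum_congr rfl fun T _ => ?_
      rw [Finset.prod_range_succ']
      simp only [extT_cons_zero, extT_cons_succ]
      ring
    · intro K T
      have hc : ∀ t : ℕ, n - (p + 1 + 1) + (t + 1) = n - (p + 1) + t := fun t => by omega
      simp only [Fin.forall_fin_succ, Fin.cons_zero, Fin.cons_succ, Fin.val_zero, Fin.val_succ, hc,
        add_zero]
      tauto

/-- The formula with `α = p + 3` and the products reindexed by ranges starting at `0`. -/
theorem Y_minor_formula_aux (n : ℕ) (X : Matrix (Fin n) (Fin n) ℂ)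
    (Y B C : ℕ → Matrix (Fin n) (Fin n) ℂ)
    (hY0 : Y 0 = X)
    (hfac : ∀ k, Y k = B k * C k)
    (hB : ∀ k, UniUpper (B k)) (hC : ∀ k, InvLower (C k))
    (hrec : ∀ k, Y (k + 1) = X * gam (B k))
    (p β : ℕ) (hαβ : p + 3 ≤ β) (hβ : β ≤ n)
    (I : Finset (Fin n)) (hIcard : I.card = β - (p + 3) + 1) :
    minor (Y (p + 1)) I (seg n (p + 2) (β - 1))
        * ∏ i ∈ Finset.range (p + 1), minor (Y i) (segGe n (i + 1)) (segGe n (i + 1))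
      = ∑ T ∈ Finset.univ.filter (fun T : Fin (p + 1) → Finset (Fin n) =>
            (∀ t, ∀ x ∈ T t, 1 ≤ (x : ℕ)) ∧
            (∀ t : Fin (p + 1),
              (T t).card = if (t : ℕ) = 0 then β - (p + 3) + 1 else n - (p + 3) + (t : ℕ) + 1) ∧
            Disjoint (shiftDown (T 0)) (segGe n (β - 1))),
          minor X I (extT T 0)
            * minor X (shiftDown (extT T 0) ∪ segGe n (β - 1)) (extT T 1)
            * ∏ t ∈ Finset.range p,
                minor X (shiftDown (extT T (t + 1)) ∪ segGe n (n - 1)) (extT T (t + 2)) := by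
  have hstep := minor_step X (hB p) (hC p) I (p + 1) (β - 2) (by omega) (by omega)
  rw [show β - 2 + 1 = β - 1 by omega, ← hfac, ← hrec] at hstep
  rw [Finset.prod_range_succ, mul_comm (∏ i ∈ Finset.range p, _), ← mul_assoc, hstep,
    Finset.sum_mul, sum_filter_cons (fun K : Finset (Fin n) =>
        (∀ x ∈ K, 1 ≤ (x : ℕ)) ∧ K.card = I.card ∧ Disjoint (shiftDown K) (segGe n (β - 1)))
        (fun T : Fin p → Finset (Fin n) =>
          (∀ t, ∀ x ∈ T t, 1 ≤ (x : ℕ)) ∧ (∀ t : Fin p, (T t).card = n - (p + 1) + t))]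
  · refine Finset.sum_congr rfl fun K _ => ?_
    rw [mul_assoc, minor_Y_eq_chainSum X Y B C hY0 hfac hB hC hrec p (by omega),
      chainSum_eq_sum X p (by omega), Finset.mul_sum]
    refine Finset.sum_congr rfl fun T _ => ?_
    have h1 := extT_cons_succ K T 0
    have h2 : ∀ t, extT (Fin.cons K T : Fin (p + 1) → Finset (Fin n)) (t + 2) = extT T (t + 1) :=
      fun t => extT_cons_succ K T (t + 1)
    rw [zero_add] at h1
    simp only [extT_cons_zero, extT_cons_succ, h1, h2]
    ring
  · intro K T
    have hc : ∀ t : ℕ, n - (p + 3) + (t + 1) + 1 = n - (p + 1) + t := fun t => by omega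
    simp only [Fin.forall_fin_succ, Fin.cons_zero, Fin.cons_succ, Fin.val_zero, Fin.val_succ,
      if_true, hIcard, Nat.add_eq_zero_iff, one_ne_zero, and_false, if_false, hc]
    tauto

/-- Lemma `lem:Fminors`: under the hypotheses of the recursion, for all
`3 ≤ α ≤ β ≤ n` and every `I ⊆ [1,n]` with `|I| = β - α + 1`,
`det (Y_{α-2})_I^{[α,β]} ∏_{s=1}^{α-2} det (Y_{α-2-s})_{[α-s,n]}^{[α-s,n]}` equals the sum over
tuples `(I_1, …, I_{α-2})` of subsets of `[2,n]` with `|I_1| = β-α+1`, `|I_t| = n-α+t`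
(`2 ≤ t ≤ α-2`) and `γ*(I_1)` disjoint from `[β, n]`, of
`det X_I^{I_1} det X_{γ*(I_1) ∪ [β,n]}^{I_2} ∏_{t=2}^{α-2} det X_{γ*(I_t) ∪ {n}}^{I_{t+1}}`,
with the convention `I_{α-1} = [2,n]` (all paper indices 1-based; 0-based element `x` stands
for the paper index `x+1`). -/
theorem Y_minor_formula (n : ℕ) (hn : 2 ≤ n) (X : Matrix (Fin n) (Fin n) ℂ) (hX : IsUnit X.det)
    (Y B C : ℕ → Matrix (Fin n) (Fin n) ℂ)
    (hY0 : Y 0 = X)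
    (hfac : ∀ k, Y k = B k * C k)
    (hB : ∀ k, UniUpper (B k)) (hC : ∀ k, InvLower (C k))
    (hrec : ∀ k, Y (k+1) = X * gam (B k))
    (α β : ℕ) (hα : 3 ≤ α) (hαβ : α ≤ β) (hβ : β ≤ n)
    (I : Finset (Fin n)) (hIcard : I.card = β - α + 1) :
    minor (Y (α-2)) I (seg n (α-1) (β-1))
        * ∏ s ∈ Finset.Icc 1 (α-2), minor (Y (α-2-s)) (segGe n (α-s-1)) (segGe n (α-s-1))
      = ∑ T ∈ Finset.univ.filter (fun T : Fin (α-2) → Finset (Fin n) =>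
            (∀ t, ∀ x ∈ T t, 1 ≤ (x:ℕ)) ∧
            (∀ t : Fin (α-2), (T t).card = if (t:ℕ) = 0 then β-α+1 else n-α+(t:ℕ)+1) ∧
            Disjoint (shiftDown (T ⟨0, by omega⟩)) (segGe n (β-1))),
          minor X I (extT T 0)
            * minor X (shiftDown (extT T 0) ∪ segGe n (β-1)) (extT T 1)
            * ∏ t ∈ Finset.Icc 2 (α-2),
                minor X (shiftDown (extT T (t-1)) ∪ {(⟨n-1, by omega⟩ : Fin n)}) (extT T t) := by
  obtain ⟨p, rfl⟩ : ∃ p, α = p + 3 := ⟨α - 3, by omega⟩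
  have hlast : ({(⟨n - 1, by omega⟩ : Fin n)} : Finset (Fin n)) = segGe n (n - 1) := by
    ext x
    have := x.isLt
    simp only [segGe, Finset.mem_singleton, Finset.mem_filter, Finset.mem_univ, true_and,
      Fin.ext_iff]
    omega
  have hL : ∏ s ∈ Finset.Icc 1 (p + 3 - 2),
      minor (Y (p + 3 - 2 - s)) (segGe n (p + 3 - s - 1)) (segGe n (p + 3 - s - 1))
      = ∏ i ∈ Finset.range (p + 1), minor (Y i) (segGe n (i + 1)) (segGe n (i + 1)) := by
    refine Finset.prod_nbij' (fun s => p + 1 - s) (fun i => p + 1 - i) ?_ ?_ ?_ ?_ ?_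
    · intro s hs; simp only [Finset.mem_Icc, Finset.mem_range] at hs ⊢; omega
    · intro s hs; simp only [Finset.mem_Icc, Finset.mem_range] at hs ⊢; omega
    · intro s hs; simp only [Finset.mem_Icc] at hs; omega
    · intro s hs; simp only [Finset.mem_range] at hs; omega
    · intro s hs
      simp only [Finset.mem_Icc] at hs
      rw [show p + 3 - 2 - s = p + 1 - s by omega, show p + 3 - s - 1 = p + 1 - s + 1 by omega]
  have hR : ∀ T : Fin (p + 1) → Finset (Fin n), ∏ t ∈ Finset.Icc 2 (p + 3 - 2),
      minor X (shiftDown (extT T (t - 1)) ∪ segGe n (n - 1)) (extT T t)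
      = ∏ t ∈ Finset.range p,
          minor X (shiftDown (extT T (t + 1)) ∪ segGe n (n - 1)) (extT T (t + 2)) := by
    intro T
    refine Finset.prod_nbij' (fun s => s - 2) (fun i => i + 2) ?_ ?_ ?_ ?_ ?_
    · intro s hs; simp only [Finset.mem_Icc, Finset.mem_range] at hs ⊢; omega
    · intro s hs; simp only [Finset.mem_Icc, Finset.mem_range] at hs ⊢; omega
    · intro s hs; simp only [Finset.mem_Icc] at hs; omega
    · intro s hs; omega
    · intro s hs
      simp only [Finset.mem_Icc] at hs
      rw [show s - 2 + 1 = s - 1 by omega, show s - 2 + 2 = s by omega]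
  have h := Y_minor_formula_aux n X Y B C hY0 hfac hB hC hrec p β hαβ hβ I hIcard
  rw [hL]
  refine h.trans ?_
  refine Finset.sum_congr rfl fun T _ => ?_
  rw [hlast]
  exact congrArg _ (hR T).symm

end
end

section
/- Let n ≥ 2 and let X be an n×n complex matrix with x_{1n} ≠ 0 and x_{n1} ≠ 0. Then m = (x_{n,n−1}, x_{n,n−2}, …, x_{n1}) · C, i.e. the row vector m equals the product of the row vector (x_{n,n−1}, x_{n,n−2}, …, x_{n1}) with the matrix C. -/
/-!
Write `a` and `r` for the first and last rows of `X` (0-based, columns `0, …, N`), `e_i` for the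
standard row vectors of length `N`, and `P = ∑_{t<N} r_{N-1-t} M^t`, so that the claim is `μ P = m`.

The matrix `M` is a companion matrix: `e_{i+1} M = e_i`, hence `e_{N-1} M^t = e_{N-1-t}` and
`e_{N-1} P = (r_0, …, r_{N-1})`. Applying `M` to this row gives `e_{N-1} P M = -r_N e_{N-1}`, and
since `e_{N-1}` is cyclic for `M`, which commutes with `P`, this forces `P M = -r_N`
(Cayley–Hamilton for `M`). On the other hand `a_N μ = (a_0, …, a_{N-1}) M + a_N e_{N-1}`; multiplying
by `P` yields `a_N μ P = -r_N (a_0, …, a_{N-1}) + a_N (r_0, …, r_{N-1}) = a_N m`.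
-/

open Matrix

noncomputable section

/-- `det X_{1n}^{ab}`: the determinant of the `2 × 2` submatrix of `X` with rows `1, n`
(0-based: `0` and `Fin.last`) and columns `a, b`. -/
def d2 {N : ℕ} (X : Matrix (Fin (N+1)) (Fin (N+1)) ℂ) (a b : Fin (N+1)) : ℂ :=
  X 0 a * X (Fin.last N) b - X 0 b * X (Fin.last N) a

/-- The row vector `μ = -(x_{1n} x_{n1})⁻¹ (det X_{1n}^{12}, …, det X_{1n}^{1n})`. -/
def muVec {N : ℕ} (X : Matrix (Fin (N+1)) (Fin (N+1)) ℂ) : Fin N → ℂ :=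
  fun t => -(X 0 (Fin.last N) * X (Fin.last N) 0)⁻¹ * d2 X 0 t.succ

/-- The row vector `m = -x_{1n}⁻¹ (det X_{1n}^{1n}, det X_{1n}^{2n}, …, det X_{1n}^{n-1,n})`. -/
def mVec {N : ℕ} (X : Matrix (Fin (N+1)) (Fin (N+1)) ℂ) : Fin N → ℂ :=
  fun t => -(X 0 (Fin.last N))⁻¹ * d2 X t.castSucc (Fin.last N)

/-- The matrix `M`: first row `-x_{n1}⁻¹ (x_{n2}, …, x_{nn})`, remaining rows `[I_{n-2} | 0]`. -/
def matM {N : ℕ} (X : Matrix (Fin (N+1)) (Fin (N+1)) ℂ) : Matrix (Fin N) (Fin N) ℂ :=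
  Matrix.of fun i j =>
    if (i:ℕ) = 0 then -(X (Fin.last N) 0)⁻¹ * X (Fin.last N) j.succ
    else if (j:ℕ) = (i:ℕ) - 1 then 1 else 0

/-- The matrix `C` with rows `μ, μM, μM², …, μM^{n-2}`. -/
def matC {N : ℕ} (X : Matrix (Fin (N+1)) (Fin (N+1)) ℂ) : Matrix (Fin N) (Fin N) ℂ :=
  Matrix.of fun t j => Matrix.vecMul (muVec X) (matM X ^ (t:ℕ)) j

theorem vecMul_matM_castSucc {K : ℕ} (X : Matrix (Fin (K+2)) (Fin (K+2)) ℂ)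
    (v : Fin (K+1) → ℂ) (j : Fin K) :
    (v ᵥ* matM X) j.castSucc
      = -v 0 * (X (Fin.last (K+1)) 0)⁻¹ * X (Fin.last (K+1)) j.castSucc.succ + v j.succ := by
  simp only [vecMul, dotProduct, Fin.sum_univ_succ, matM, of_apply]
  simp [← Fin.ext_iff]
  ring

theorem vecMul_matM_last {K : ℕ} (X : Matrix (Fin (K+2)) (Fin (K+2)) ℂ)
    (v : Fin (K+1) → ℂ) :
    (v ᵥ* matM X) (Fin.last K)
      = -v 0 * (X (Fin.last (K+1)) 0)⁻¹ * X (Fin.last (K+1)) (Fin.last (K+1)) := by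
  simp only [vecMul, dotProduct, Fin.sum_univ_succ, matM, of_apply]
  have h (i : Fin K) : K ≠ (i : ℕ) := i.isLt.ne'
  simp [h, mul_assoc]

/-- The shift `e_{i+1} M = e_i`. -/
theorem single_succ_vecMul_matM {K : ℕ} (X : Matrix (Fin (K+2)) (Fin (K+2)) ℂ) (i : Fin K) :
    (Pi.single i.succ 1 : Fin (K+1) → ℂ) ᵥ* matM X = Pi.single i.castSucc 1 := by
  ext j
  induction j using Fin.lastCases with
  | last => rw [vecMul_matM_last]; simp [Fin.ext_iff, i.isLt.ne']
  | cast j => rw [vecMul_matM_castSucc]; simp [Pi.single_apply, Fin.ext_iff]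

/-- Iterating the shift from the last standard vector: `e_K M^t = e_{K-t}`. -/
theorem single_last_vecMul_pow {K : ℕ} (X : Matrix (Fin (K+2)) (Fin (K+2)) ℂ) (t : ℕ)
    (ht : t ≤ K) :
    (Pi.single (Fin.last K) 1 : Fin (K+1) → ℂ) ᵥ* (matM X ^ t)
      = Pi.single ⟨K - t, by omega⟩ 1 := by
  induction t with
  | zero => simp [Fin.last]
  | succ t ih =>
    rw [pow_succ, ← vecMul_vecMul, ih (by omega)]
    have hs : (⟨K - t, by omega⟩ : Fin (K+1)) = Fin.succ ⟨K - (t+1), by omega⟩ := by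
      simp only [Fin.succ_mk, Fin.mk.injEq]
      omega
    rw [hs, single_succ_vecMul_matM]
    rfl

/-- The polynomial `P = ∑_t x_{n,n-1-t} M^t` in `M`, for which `(x_{n,n-1}, …, x_{n1}) C = μ P`. -/
def polyP {K : ℕ} (X : Matrix (Fin (K+2)) (Fin (K+2)) ℂ) : Matrix (Fin (K+1)) (Fin (K+1)) ℂ :=
  ∑ t : Fin (K+1), X (Fin.last (K+1)) ⟨K - (t:ℕ), by omega⟩ • matM X ^ (t:ℕ)

theorem commute_polyP {K : ℕ} (X : Matrix (Fin (K+2)) (Fin (K+2)) ℂ) :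
    Commute (polyP X) (matM X) :=
  Commute.sum_left _ _ _ fun _ _ => ((Commute.refl _).pow_left _).smul_left _

theorem vecMul_polyP {K : ℕ} (X : Matrix (Fin (K+2)) (Fin (K+2)) ℂ) (v : Fin (K+1) → ℂ) :
    v ᵥ* polyP X = ∑ t : Fin (K+1),
      X (Fin.last (K+1)) ⟨K - (t:ℕ), by omega⟩ • (v ᵥ* matM X ^ (t:ℕ)) := by
  simp only [polyP, vecMul_sum, vecMul_smul]

/-- The last row of `P` is the last row of `X` without its last entry. -/
theorem single_last_vecMul_polyP {K : ℕ} (X : Matrix (Fin (K+2)) (Fin (K+2)) ℂ) :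
    (Pi.single (Fin.last K) 1 : Fin (K+1) → ℂ) ᵥ* polyP X
      = fun j => X (Fin.last (K+1)) j.castSucc := by
  rw [vecMul_polyP]
  ext j
  rw [Finset.sum_apply, Finset.sum_eq_single (Fin.rev j)]
  · rw [single_last_vecMul_pow X _ (by omega)]
    have h : K - (Fin.rev j : ℕ) = j := by rw [Fin.val_rev]; omega
    simp only [h]
    simp
    rfl
  · intro t _ ht
    rw [single_last_vecMul_pow X _ (by omega)]
    have h : j ≠ ⟨K - (t:ℕ), by omega⟩ := by
      rintro rfl
      apply ht
      ext
      rw [Fin.val_rev]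
      dsimp only
      omega
    simp [h]
  · simp

/-- Cayley–Hamilton for the companion matrix `M`, in the form `P M = -x_{nn}`. -/
theorem polyP_mul_matM {K : ℕ} (X : Matrix (Fin (K+2)) (Fin (K+2)) ℂ)
    (hn1 : X (Fin.last (K+1)) 0 ≠ 0) :
    polyP X * matM X = -X (Fin.last (K+1)) (Fin.last (K+1)) • 1 := by
  set c := -X (Fin.last (K+1)) (Fin.last (K+1)) with hc
  have key : (Pi.single (Fin.last K) 1 : Fin (K+1) → ℂ) ᵥ* (polyP X * matM X)
      = c • Pi.single (Fin.last K) 1 := by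
    rw [← vecMul_vecMul, single_last_vecMul_polyP]
    ext j
    induction j using Fin.lastCases with
    | last => rw [vecMul_matM_last]; simp [hc]; field_simp
    | cast j =>
      rw [vecMul_matM_castSucc]
      simp [(Fin.castSucc_lt_last j).ne]
      field_simp
      simp
  -- Every row of `P M` is obtained from the last one by a power of `M`, which commutes with `P M`.
  have row (i : Fin (K+1)) : (Pi.single i 1 : Fin (K+1) → ℂ) ᵥ* (polyP X * matM X)
      = c • Pi.single i 1 := by
    have hi : (Pi.single i 1 : Fin (K+1) → ℂ)
        = Pi.single (Fin.last K) 1 ᵥ* matM X ^ (K - (i:ℕ)) := by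
      rw [single_last_vecMul_pow X _ (by omega)]
      congr 1
      ext
      dsimp only
      omega
    have hcomm : Commute (polyP X * matM X) (matM X ^ (K - (i:ℕ))) :=
      ((commute_polyP X).mul_left (Commute.refl _)).pow_right _
    rw [hi, vecMul_vecMul, ← hcomm.eq, ← vecMul_vecMul, key, smul_vecMul]
  ext i j
  have h := congrFun (row i) j
  simpa [Matrix.one_apply, Pi.single_apply, eq_comm] using h

/-- `x_{1n} μ = (x_{11}, …, x_{1,n-1}) M + x_{1n} e_{n-1}`. -/
theorem smul_muVec {K : ℕ} (X : Matrix (Fin (K+2)) (Fin (K+2)) ℂ)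
    (h1n : X 0 (Fin.last (K+1)) ≠ 0) (hn1 : X (Fin.last (K+1)) 0 ≠ 0) :
    X 0 (Fin.last (K+1)) • muVec X
      = (fun j : Fin (K+1) => X 0 j.castSucc) ᵥ* matM X
        + X 0 (Fin.last (K+1)) • Pi.single (Fin.last K) 1 := by
  ext j
  induction j using Fin.lastCases with
  | last =>
    rw [Pi.add_apply, vecMul_matM_last]
    simp [muVec, d2]
    field_simp
    ring
  | cast j =>
    rw [Pi.add_apply, vecMul_matM_castSucc]
    simp [muVec, d2, (Fin.castSucc_lt_last j).ne]
    field_simp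
    ring

/-- Lemma `eq:vtomu`: `m = (x_{n,n-1}, …, x_{n1}) ⬝ C` (paper's `n = N+1 ≥ 2`). -/
theorem m_eq_row_mul_C (N : ℕ) (hN : 1 ≤ N) (X : Matrix (Fin (N+1)) (Fin (N+1)) ℂ)
    (h1n : X 0 (Fin.last N) ≠ 0) (hn1 : X (Fin.last N) 0 ≠ 0) :
    mVec X
      = Matrix.vecMul (fun t : Fin N => X (Fin.last N) ⟨N-1-(t:ℕ), by omega⟩) (matC X) := by
  obtain ⟨K, rfl⟩ : ∃ K, N = K + 1 := ⟨N - 1, by omega⟩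
  have hC : Matrix.vecMul (fun t : Fin (K+1) => X (Fin.last (K+1)) ⟨K+1-1-(t:ℕ), by omega⟩)
      (matC X) = muVec X ᵥ* polyP X := by
    rw [vecMul_polyP]
    ext j
    simp [vecMul, dotProduct, matC, Finset.sum_apply]
  rw [hC]
  have h : X 0 (Fin.last (K+1)) • (muVec X ᵥ* polyP X) = X 0 (Fin.last (K+1)) • mVec X := by
    rw [← smul_vecMul, smul_muVec X h1n hn1, add_vecMul, vecMul_vecMul, ← (commute_polyP X).eq,
      polyP_mul_matM X hn1, smul_vecMul, single_last_vecMul_polyP, vecMul_smul, vecMul_one]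
    ext j
    simp [mVec, d2]
    field_simp
    ring
  exact (smul_right_injective _ h1n h).symm

end
end
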